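/- For all integers 0 < d < n and every M < +∞, there exist ε > 0 (depending only on n, d) and C ≥ 1 (depending only on n, d, M) with the following property. Let E ⊆ ℝ^n be a closed set containing the origin such that for every x ∈ E ∩ B(0,10) and every 0 < r ≤ 10 there is a d-dimensional affine plane P(x,r) containing x with dist(y,P(x,r)) ≤ εr for all y ∈ E ∩ B(x,r) and dist(y,E) ≤ εr for all y ∈ P(x,r) ∩ B(x,r). Assume in addition that J_∞(x) ≤ M for all x ∈ E ∩ B(0,10). Then there is a bijective map g : ℝ^n → ℝ^n such that E ∩ B(0,1) = g(P(0,10)) ∩ B(0,1) and C⁻¹|x−y| ≤ |g(x) − g(y)| ≤ C|x−y| for all x, y ∈ ℝ^n. (Theorem 1.13.) -/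

import Mathlib

open Metric Set

noncomputable section

/-- `ℝⁿ`. -/
abbrev V (n : ℕ) := EuclideanSpace ℝ (Fin n)

/-- `P` is a `d`-dimensional affine plane of `ℝⁿ`. -/
def IsAffinePlane (n d : ℕ) (P : Set (V n)) : Prop :=
  ∃ Q : AffineSubspace ℝ (V n), (Q : Set (V n)) = P ∧
    Module.finrank ℝ Q.direction = d ∧ (Q : Set (V n)).Nonempty

/-- The Jones number `β_∞(x,r)`: the normalized infimum, over `d`-planes `P`
through `x`, of the sup of `dist(y,P)` over `y ∈ E ∩ B(x,r)`. -/
def betaInf (n d : ℕ) (E : Set (V n)) (x : V n) (r : ℝ) : ℝ :=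
  r⁻¹ * sInf { s : ℝ | ∃ P : Set (V n), IsAffinePlane n d P ∧ x ∈ P ∧
    s = ⨆ y ∈ E ∩ ball x r, infDist y P }

/-!
At each scale `r_k`, a partition of unity averages the orthogonal projections onto planes that
approximate `E` into a map of `ℝⁿ`, and composing these maps moves the plane `P(0,10)` onto `E`.
Projecting onto a plane at angle `β` changes the length of a vector nearly tangent to it only by a
factor `1 + O(β²)`, so that `∑ β_∞² ≤ M` bounds the total distortion of tangent vectors by
`exp (O(M))`. Vectors orthogonal to `P(0,10)` are transported from scale to scale by removing their
component along the approximating planes, with the same quadratic error. A point `z` is sent to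
the image of its projection to `P(0,10)` plus its transported orthogonal part; this is done only
down to the scale comparable to the length of that part, by means of cutoffs. Each approximation is
differentiable with distortion bounded independently of the scale, and consecutive ones have
close derivatives, so that bijectivity passes from one to the next and then to the limit.
-/

section BilipschitzBijections

open Filter Topology
open scoped NNReal

variable {H : Type*} [NormedAddCommGroup H] [NormedSpace ℝ H]

theorem exists_homeomorph_of_lipschitzWith_sub_id [CompleteSpace H] {φ : H → H} {c : ℝ≥0}
    (hc : c < 1) (hφ : LipschitzWith c fun y => φ y - y) : ∃ Φ : H ≃ₜ H, ⇑Φ = φ := by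
  have happ : ApproximatesLinearOn φ (ContinuousLinearEquiv.refl ℝ H : H →L[ℝ] H) univ c := by
    rw [ApproximatesLinearOn.approximatesLinearOn_iff_lipschitzOnWith]
    exact hφ.lipschitzOnWith
  have hc' : Subsingleton H ∨ c < ‖((ContinuousLinearEquiv.refl ℝ H).symm : H →L[ℝ] H)‖₊⁻¹ := by
    rcases subsingleton_or_nontrivial H with hH | hH
    · exact Or.inl hH
    · have hid : ‖((ContinuousLinearEquiv.refl ℝ H).symm : H →L[ℝ] H)‖₊ = 1 :=
        NNReal.eq ContinuousLinearMap.norm_id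
      rw [hid, inv_one]
      exact Or.inr hc
  exact ⟨happ.toHomeomorph φ hc', rfl⟩

theorem lipschitzWith_of_norm_fderiv_apply_le {f : H → H} {C : ℝ≥0} (hf : Differentiable ℝ f)
    (h : ∀ z v, ‖fderiv ℝ f z v‖ ≤ C * ‖v‖) : LipschitzWith C f :=
  lipschitzWith_of_nnnorm_fderiv_le hf fun z =>
    (fderiv ℝ f z).opNorm_le_bound C.coe_nonneg (h z)

variable [FiniteDimensional ℝ H]

theorem exists_hasFDerivAt_symm (f : H ≃ₜ H) (hf : Differentiable ℝ f)
    (hinj : ∀ z, Function.Injective (fderiv ℝ f z)) (y : H) :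
    ∃ T : H →L[ℝ] H, HasFDerivAt f.symm T y ∧ ∀ w, fderiv ℝ f (f.symm y) (T w) = w := by
  let e : H ≃L[ℝ] H := (LinearEquiv.ofInjectiveEndo
    (fderiv ℝ f (f.symm y) : H →ₗ[ℝ] H) (hinj _)).toContinuousLinearEquiv
  refine ⟨e.symm, ?_, e.apply_symm_apply⟩
  have hfy : HasFDerivAt f (e : H →L[ℝ] H) (f.symm y) := (hf _).hasFDerivAt
  exact hfy.of_local_left_inverse f.symm.continuous.continuousAt
    (Eventually.of_forall f.apply_symm_apply)

theorem lipschitzWith_comp_symm_sub_id (f : H ≃ₜ H) (hf : Differentiable ℝ f)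
    (hinj : ∀ z, Function.Injective (fderiv ℝ f z)) {g : H → H} (hg : Differentiable ℝ g) {c : ℝ≥0}
    (hclose : ∀ z h, ‖fderiv ℝ g z h - fderiv ℝ f z h‖ ≤ c * ‖fderiv ℝ f z h‖) :
    LipschitzWith c fun y => g (f.symm y) - y := by
  choose T hT hTw using exists_hasFDerivAt_symm f hf hinj
  have hder : ∀ y, HasFDerivAt (fun y => g (f.symm y) - y)
      ((fderiv ℝ g (f.symm y)).comp (T y) - ContinuousLinearMap.id ℝ H) y := fun y =>
    ((hg (f.symm y)).hasFDerivAt.comp y (hT y)).sub (hasFDerivAt_id y)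
  refine lipschitzWith_of_norm_fderiv_apply_le (fun y => (hder y).differentiableAt) fun y w => ?_
  have h := hclose (f.symm y) (T y w)
  rw [hTw] at h
  rw [(hder y).fderiv]
  exact h

theorem exists_homeomorph_of_fderiv_close (f : H ≃ₜ H) (hf : Differentiable ℝ f)
    (hinj : ∀ z, Function.Injective (fderiv ℝ f z)) {g : H → H} (hg : Differentiable ℝ g) {c : ℝ≥0}
    (hc : c < 1)
    (hclose : ∀ z h, ‖fderiv ℝ g z h - fderiv ℝ f z h‖ ≤ c * ‖fderiv ℝ f z h‖) :
    ∃ G : H ≃ₜ H, ⇑G = g := by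
  obtain ⟨Φ, hΦ⟩ := exists_homeomorph_of_lipschitzWith_sub_id hc
    (lipschitzWith_comp_symm_sub_id f hf hinj hg hclose)
  refine ⟨f.trans Φ, funext fun z => ?_⟩
  simp only [Homeomorph.trans_apply, hΦ, f.symm_apply_apply]

theorem antilipschitzWith_of_le_norm_fderiv_apply (f : H ≃ₜ H) (hf : Differentiable ℝ f) {C : ℝ≥0}
    (hinj : ∀ z, Function.Injective (fderiv ℝ f z))
    (h : ∀ z v, ‖v‖ ≤ C * ‖fderiv ℝ f z v‖) : AntilipschitzWith C f := by
  choose T hT hTw using exists_hasFDerivAt_symm f hf hinj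
  have hsymm : LipschitzWith C f.symm := by
    refine lipschitzWith_of_norm_fderiv_apply_le (fun y => (hT y).differentiableAt) fun y w => ?_
    rw [(hT y).fderiv]
    exact (h (f.symm y) (T y w)).trans_eq (by rw [hTw])
  exact hsymm.to_rightInverse f.symm_apply_apply

theorem bijective_bilipschitz_of_fderiv_chain {g : ℕ → H → H} {C c : ℝ≥0} (hc : c < 1)
    (h0 : g 0 = id) (hg : ∀ k, Differentiable ℝ (g k))
    (hup : ∀ k z h, ‖fderiv ℝ (g k) z h‖ ≤ C * ‖h‖)
    (hlow : ∀ k z h, ‖h‖ ≤ C * ‖fderiv ℝ (g k) z h‖)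
    (hclose : ∀ k z h,
      ‖fderiv ℝ (g (k + 1)) z h - fderiv ℝ (g k) z h‖ ≤ c * ‖fderiv ℝ (g k) z h‖) (k : ℕ) :
    Function.Bijective (g k) ∧ LipschitzWith C (g k) ∧ AntilipschitzWith C (g k) := by
  have hinj : ∀ k z, Function.Injective (fderiv ℝ (g k) z) := fun k z => by
    refine (injective_iff_map_eq_zero _).2 fun v hv => norm_le_zero_iff.1 ?_
    simpa only [hv, norm_zero, mul_zero] using hlow k z v
  have hhomeo : ∀ k, ∃ G : H ≃ₜ H, ⇑G = g k := by
    intro k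
    induction k with
    | zero => exact ⟨Homeomorph.refl H, h0.symm⟩
    | succ k ih =>
      obtain ⟨G, hG⟩ := ih
      refine exists_homeomorph_of_fderiv_close G (hG ▸ hg k) (hG ▸ hinj k) (hg (k + 1)) hc ?_
      exact hG ▸ hclose k
  obtain ⟨G, hG⟩ := hhomeo k
  exact ⟨hG ▸ G.bijective, lipschitzWith_of_norm_fderiv_apply_le (hg k) (hup k),
    hG ▸ antilipschitzWith_of_le_norm_fderiv_apply G (hG ▸ hg k) (hG ▸ hinj k) (hG ▸ hlow k)⟩

end BilipschitzBijections

section BilipschitzLimits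

open Filter Topology
open scoped NNReal

variable {X Y : Type*} [MetricSpace X] [MetricSpace Y]

theorem antilipschitzWith_of_tendsto {g : ℕ → X → Y} {G : X → Y} {C : ℝ≥0}
    (hg : ∀ k, AntilipschitzWith C (g k)) (hG : ∀ x, Tendsto (fun k => g k x) atTop (𝓝 (G x))) :
    AntilipschitzWith C G :=
  AntilipschitzWith.of_le_mul_dist fun x y =>
    ge_of_tendsto' (((hG x).dist (hG y)).const_mul (C : ℝ)) fun k => (hg k).le_mul_dist x y

theorem lipschitzWith_of_tendsto {g : ℕ → X → Y} {G : X → Y} {C : ℝ≥0}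
    (hg : ∀ k, LipschitzWith C (g k)) (hG : ∀ x, Tendsto (fun k => g k x) atTop (𝓝 (G x))) :
    LipschitzWith C G :=
  (isClosed_setOfPred_lipschitzWith C).mem_of_tendsto (tendsto_pi_nhds.2 hG)
    (Eventually.of_forall hg)

theorem surjective_of_isClosed_range_of_tendsto {X : Type*} {g : ℕ → X → Y} {G : X → Y} {a : ℕ → ℝ}
    (hG : IsClosed (range G)) (hg : ∀ k, Function.Surjective (g k))
    (ha : Tendsto a atTop (𝓝 0)) (hga : ∀ k x, dist (G x) (g k x) ≤ a k) :
    Function.Surjective G := by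
  intro y
  choose x hx using fun k => hg k y
  refine hG.mem_of_tendsto (?_ : Tendsto (fun k => G (x k)) atTop (𝓝 y))
    (Eventually.of_forall fun k => mem_range_self _)
  refine tendsto_iff_dist_tendsto_zero.2 (squeeze_zero (fun _ => dist_nonneg) (fun k => ?_) ha)
  exact hx k ▸ hga k (x k)

theorem exists_bilipschitz_limit [CompleteSpace X] [CompleteSpace Y] {g : ℕ → X → Y} {C : ℝ≥0}
    {c q : ℝ} (hq₀ : 0 ≤ q) (hq : q < 1) (hsurj : ∀ k, Function.Surjective (g k))
    (hlip : ∀ k, LipschitzWith C (g k)) (hanti : ∀ k, AntilipschitzWith C (g k))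
    (hstep : ∀ k z, dist (g k z) (g (k + 1) z) ≤ c * q ^ k) :
    ∃ G : X → Y, Function.Surjective G ∧ LipschitzWith C G ∧ AntilipschitzWith C G ∧
      ∀ k z, dist (G z) (g k z) ≤ c * q ^ k / (1 - q) := by
  choose G hG using fun z => cauchySeq_tendsto_of_complete
    (cauchySeq_of_le_geometric q c hq fun k => hstep k z)
  have hdist : ∀ k z, dist (G z) (g k z) ≤ c * q ^ k / (1 - q) := fun k z =>
    dist_comm (g k z) (G z) ▸
      dist_le_of_le_geometric_of_tendsto q c hq (fun k => hstep k z) (hG z) k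
  have hlipG := lipschitzWith_of_tendsto hlip hG
  have hantiG := antilipschitzWith_of_tendsto hanti hG
  have hzero : Tendsto (fun k => c * q ^ k / (1 - q)) atTop (𝓝 0) := by
    simpa using ((tendsto_pow_atTop_nhds_zero_of_lt_one hq₀ hq).const_mul c).div_const (1 - q)
  exact ⟨G, surjective_of_isClosed_range_of_tendsto
    (hantiG.isClosed_range hlipG.uniformContinuous) hsurj hzero hdist, hlipG, hantiG, hdist⟩

end BilipschitzLimits

section WeightedSums

variable {F ι : Type*} [SeminormedAddCommGroup F] [NormedSpace ℝ F] {X : Finset ι} {x : ι → F}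
  {B : ℝ}

theorem norm_sum_smul_le_sum_abs_mul {η : ι → ℝ} (hx : ∀ c ∈ X, η c ≠ 0 → ‖x c‖ ≤ B) :
    ‖∑ c ∈ X, η c • x c‖ ≤ (∑ c ∈ X, |η c|) * B := by
  rw [Finset.sum_mul]
  refine norm_sum_le_of_le _ fun c hc => ?_
  rw [norm_smul, Real.norm_eq_abs]
  by_cases h : η c = 0
  · simp [h]
  · exact mul_le_mul_of_nonneg_left (hx c hc h) (abs_nonneg _)

theorem norm_sum_smul_le_sum_mul {θ : ι → ℝ} (hθ : ∀ c ∈ X, 0 ≤ θ c)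
    (hx : ∀ c ∈ X, θ c ≠ 0 → ‖x c‖ ≤ B) : ‖∑ c ∈ X, θ c • x c‖ ≤ (∑ c ∈ X, θ c) * B :=
  (norm_sum_smul_le_sum_abs_mul hx).trans_eq
    (by rw [Finset.sum_congr rfl fun c hc => abs_of_nonneg (hθ c hc)])

theorem norm_sum_smul_le_of_sum_le_one {θ : ι → ℝ} (hB : 0 ≤ B) (hθ : ∀ c ∈ X, 0 ≤ θ c)
    (hsum : ∑ c ∈ X, θ c ≤ 1) (hx : ∀ c ∈ X, θ c ≠ 0 → ‖x c‖ ≤ B) :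
    ‖∑ c ∈ X, θ c • x c‖ ≤ B :=
  (norm_sum_smul_le_sum_mul hθ hx).trans (mul_le_of_le_one_left hB hsum)

end WeightedSums

section Projections

variable {H : Type*} [NormedAddCommGroup H] [InnerProductSpace ℝ H]
  (L L' : Submodule ℝ H) [L.HasOrthogonalProjection] [L'.HasOrthogonalProjection]

theorem starProjection_starProjection (x : H) :
    L.starProjection (L.starProjection x) = L.starProjection x :=
  Submodule.starProjection_eq_self_iff.2 (L.starProjection_apply_mem x)

theorem starProjection_orthogonal_starProjection (x : H) :
    Lᗮ.starProjection (L.starProjection x) = 0 :=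
  Submodule.starProjection_orthogonal_apply_eq_zero (L.starProjection_apply_mem x)

theorem starProjection_starProjection_orthogonal (x : H) :
    L.starProjection (Lᗮ.starProjection x) = 0 :=
  (Submodule.starProjection_apply_eq_zero_iff L).2 (Lᗮ.starProjection_apply_mem x)

theorem inner_starProjection_right (x y : H) :
    inner ℝ x (L.starProjection y) = inner ℝ (L.starProjection x) (L.starProjection y) := by
  rw [L.inner_starProjection_left_eq_right, starProjection_starProjection]

/-- The gap between two subspaces, measuring the angle between them: the operator norm of the
difference of their orthogonal projections. -/
def gap : ℝ := ‖L.starProjection - L'.starProjection‖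

theorem gap_orthogonal : gap Lᗮ L'ᗮ = gap L L' := by
  rw [gap, Submodule.starProjection_orthogonal, Submodule.starProjection_orthogonal,
    sub_sub_sub_cancel_left, norm_sub_rev, gap]

theorem gap_le_norm_comp_add_norm_comp [CompleteSpace H] :
    gap L L' ≤ ‖L'ᗮ.starProjection ∘L L.starProjection‖
      + ‖Lᗮ.starProjection ∘L L'.starProjection‖ := by
  have hsplit : L.starProjection - L'.starProjection
      = L'ᗮ.starProjection ∘L L.starProjection - L'.starProjection ∘L Lᗮ.starProjection := by
    ext x
    simp only [sub_apply, ContinuousLinearMap.comp_apply, Submodule.starProjection_orthogonal_val,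
      map_sub]
    abel
  have hadj : ‖L'.starProjection ∘L Lᗮ.starProjection‖
      = ‖Lᗮ.starProjection ∘L L'.starProjection‖ := by
    rw [← LinearIsometryEquiv.norm_map ContinuousLinearMap.adjoint,
      ContinuousLinearMap.adjoint_comp, (isSelfAdjoint_starProjection _).adjoint_eq,
      (isSelfAdjoint_starProjection _).adjoint_eq]
  rw [gap, hsplit, ← hadj]
  exact norm_sub_le _ _

variable {L L'} {b m : ℝ}

theorem norm_starProjection_sub_le (h : gap L L' ≤ b) (x : H) :
    ‖L.starProjection x - L'.starProjection x‖ ≤ b * ‖x‖ :=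
  (L.starProjection - L'.starProjection).le_of_opNorm_le h x

theorem norm_starProjection_orthogonal_sub_le (h : gap L L' ≤ b) (x : H) :
    ‖Lᗮ.starProjection x - L'ᗮ.starProjection x‖ ≤ b * ‖x‖ :=
  norm_starProjection_sub_le ((gap_orthogonal L L').trans_le h) x

theorem norm_starProjection_le_of_gap_le (h : gap L L' ≤ b) {v : H}
    (hv : ‖L'.starProjection v‖ ≤ m * b * ‖v‖) : ‖L.starProjection v‖ ≤ (m + 1) * b * ‖v‖ := by
  have htri := norm_le_norm_add_norm_sub' (L.starProjection v) (L'.starProjection v)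
  linarith [norm_starProjection_sub_le h v]

theorem norm_starProjection_starProjection_orthogonal_le (h : gap L L' ≤ b) (v : H) :
    ‖L'.starProjection (Lᗮ.starProjection v)‖ ≤ b * ‖v‖ := by
  have hsub : L'.starProjection (Lᗮ.starProjection v)
      = L'.starProjection (Lᗮ.starProjection v - L'ᗮ.starProjection v) := by
    rw [map_sub, starProjection_starProjection_orthogonal, sub_zero]
  rw [hsub]
  exact (L'.norm_starProjection_apply_le _).trans (norm_starProjection_orthogonal_sub_le h v)

end Projections

section AveragedSteps

variable {H ι : Type*} [NormedAddCommGroup H] [InnerProductSpace ℝ H]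

theorem norm_sub_sum_starProjection_le {X : Finset ι} {L : ι → Submodule ℝ H}
    [∀ c, (L c).HasOrthogonalProjection] {θ : ι → ℝ} (hθ : ∀ c ∈ X, 0 ≤ θ c)
    (hsum : ∑ c ∈ X, θ c ≤ 1) (w : H) :
    ‖w - ∑ c ∈ X, θ c • (L c).starProjection w‖ ≤ ‖w‖ := by
  have hconvex : w - ∑ c ∈ X, θ c • (L c).starProjection w
      = (1 - ∑ c ∈ X, θ c) • w + ∑ c ∈ X, θ c • (L c)ᗮ.starProjection w := by
    simp only [Submodule.starProjection_orthogonal_val, smul_sub, Finset.sum_sub_distrib, sub_smul,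
      one_smul, Finset.sum_smul]
    abel
  have hnormal : ‖∑ c ∈ X, θ c • (L c)ᗮ.starProjection w‖ ≤ (∑ c ∈ X, θ c) * ‖w‖ :=
    norm_sum_smul_le_sum_mul hθ fun c _ _ => (L c)ᗮ.norm_starProjection_apply_le w
  rw [hconvex]
  refine (norm_add_le _ _).trans ?_
  rw [norm_smul, Real.norm_of_nonneg (sub_nonneg.2 hsum)]
  linarith

/-- The weights `θ` have total mass at most one and charge only subspaces at gap at most `b` from
the reference subspace `N₀`. -/
structure IsWeightNear (X : Finset ι) (θ : ι → ℝ) (N : ι → Submodule ℝ H) (N₀ : Submodule ℝ H)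
    [∀ c, (N c).HasOrthogonalProjection] [N₀.HasOrthogonalProjection] (b : ℝ) : Prop where
  nonneg : ∀ c ∈ X, 0 ≤ θ c
  sum_le_one : ∑ c ∈ X, θ c ≤ 1
  gap_le : ∀ c ∈ X, θ c ≠ 0 → gap (N c) N₀ ≤ b

namespace IsWeightNear

variable {X : Finset ι} {θ η : ι → ℝ} {y : ι → H} {N : ι → Submodule ℝ H} {N₀ : Submodule ℝ H}
  [∀ c, (N c).HasOrthogonalProjection] [N₀.HasOrthogonalProjection] {b m ρ κ : ℝ} {v : H}

theorem orthogonal (h : IsWeightNear X θ N N₀ b) :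
    IsWeightNear X θ (fun c => (N c)ᗮ) N₀ᗮ b where
  nonneg := h.nonneg
  sum_le_one := h.sum_le_one
  gap_le c hc hc0 := (gap_orthogonal (N c) N₀).trans_le (h.gap_le c hc hc0)

theorem norm_sum_starProjection_le (h : IsWeightNear X θ N N₀ b) (hb : 0 ≤ b) (hm : 0 ≤ m)
    (hv : ‖N₀.starProjection v‖ ≤ m * b * ‖v‖) :
    ‖∑ c ∈ X, θ c • (N c).starProjection v‖ ≤ (m + 1) * b * ‖v‖ :=
  norm_sum_smul_le_of_sum_le_one (by positivity) h.nonneg h.sum_le_one fun c hc hc0 =>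
    norm_starProjection_le_of_gap_le (h.gap_le c hc hc0) hv

theorem norm_step_le (h : IsWeightNear X θ N N₀ b) (hb : 0 ≤ b) (hm : 0 ≤ m)
    (hv : ‖N₀.starProjection v‖ ≤ m * b * ‖v‖) (hρ : 0 ≤ ρ)
    (hη : ∑ c ∈ X, |η c| ≤ κ * ‖v‖) (hy : ∀ c ∈ X, η c ≠ 0 → ‖y c‖ ≤ ρ) :
    ‖∑ c ∈ X, θ c • (N c).starProjection v + ∑ c ∈ X, η c • y c‖
      ≤ ((m + 1) * b + κ * ρ) * ‖v‖ := by
  have hθ := h.norm_sum_starProjection_le hb hm hv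
  have hη' := (norm_sum_smul_le_sum_abs_mul hy).trans (mul_le_mul_of_nonneg_right hη hρ)
  exact (norm_add_le _ _).trans (by linarith)

theorem abs_inner_sum_starProjection_le (h : IsWeightNear X θ N N₀ b)
    (hv : ‖N₀.starProjection v‖ ≤ m * b * ‖v‖) :
    |inner ℝ v (∑ c ∈ X, θ c • (N c).starProjection v)| ≤ ((m + 1) * b * ‖v‖) ^ 2 := by
  rw [inner_sum, ← Real.norm_eq_abs]
  simp only [inner_smul_right]
  refine norm_sum_smul_le_of_sum_le_one (F := ℝ) (by positivity) h.nonneg h.sum_le_one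
    fun c hc hc0 => ?_
  rw [inner_starProjection_right, real_inner_self_eq_norm_sq, Real.norm_of_nonneg (by positivity)]
  exact pow_le_pow_left₀ (norm_nonneg _) (norm_starProjection_le_of_gap_le (h.gap_le c hc hc0) hv) 2

theorem abs_inner_sum_smul_le (h : IsWeightNear X θ N N₀ b) (hb : 0 ≤ b) (hm : 0 ≤ m)
    (hv : ‖N₀.starProjection v‖ ≤ m * b * ‖v‖) (hρ : 0 ≤ ρ)
    (hη : ∑ c ∈ X, |η c| ≤ κ * ‖v‖) (hy : ∀ c ∈ X, η c ≠ 0 → ‖y c‖ ≤ ρ)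
    (hηθ : ∀ c ∈ X, η c ≠ 0 → θ c ≠ 0) (hyN : ∀ c ∈ X, y c ∈ N c) :
    |inner ℝ v (∑ c ∈ X, η c • y c)| ≤ κ * ‖v‖ * ((m + 1) * b * ‖v‖ * ρ) := by
  rw [inner_sum, ← Real.norm_eq_abs]
  simp only [inner_smul_right]
  refine (norm_sum_smul_le_sum_abs_mul fun c hc hc0 => ?_).trans
    (mul_le_mul_of_nonneg_right hη (by positivity))
  rw [← Submodule.starProjection_eq_self_iff.2 (hyN c hc), inner_starProjection_right,
    Submodule.starProjection_eq_self_iff.2 (hyN c hc)]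
  have hvc := norm_starProjection_le_of_gap_le (h.gap_le c hc (hηθ c hc hc0)) hv
  exact (norm_inner_le_norm _ _).trans
    (mul_le_mul hvc (hy c hc hc0) (norm_nonneg _) (by positivity))

/- The correction lies in the subspaces `N c`, to which `v` is nearly orthogonal; this makes the
first-order term of the change of `‖v‖ ^ 2` quadratically small as well. -/
theorem abs_norm_sub_step_sq_sub_le (h : IsWeightNear X θ N N₀ b) (hb : 0 ≤ b) (hm : 0 ≤ m)
    (hv : ‖N₀.starProjection v‖ ≤ m * b * ‖v‖) (hρ : 0 ≤ ρ) (hκ : 0 ≤ κ)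
    (hη : ∑ c ∈ X, |η c| ≤ κ * ‖v‖) (hy : ∀ c ∈ X, η c ≠ 0 → ‖y c‖ ≤ ρ)
    (hηθ : ∀ c ∈ X, η c ≠ 0 → θ c ≠ 0) (hyN : ∀ c ∈ X, y c ∈ N c) :
    |‖v - (∑ c ∈ X, θ c • (N c).starProjection v + ∑ c ∈ X, η c • y c)‖ ^ 2 - ‖v‖ ^ 2|
      ≤ 3 * ((m + 1) * b + κ * ρ) ^ 2 * ‖v‖ ^ 2 := by
  have hstep := pow_le_pow_left₀ (norm_nonneg _) (h.norm_step_le hb hm hv hρ hη hy) 2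
  have hinner := abs_le.1 (h.abs_inner_sum_starProjection_le hv)
  have hinner' := abs_le.1 (h.abs_inner_sum_smul_le hb hm hv hρ hη hy hηθ hyN)
  set D := ∑ c ∈ X, θ c • (N c).starProjection v
  set D' := ∑ c ∈ X, η c • y c
  rw [norm_sub_sq_real, inner_add_right, abs_le]
  have hcross : 0 ≤ κ * ρ * ((m + 1) * b) * ‖v‖ ^ 2 := by positivity
  have hη_sq : 0 ≤ (κ * ρ * ‖v‖) ^ 2 := by positivity
  have hθ_sq : 0 ≤ ((m + 1) * b * ‖v‖) ^ 2 := by positivity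
  have hD_sq : 0 ≤ ‖D + D'‖ ^ 2 := by positivity
  constructor <;> nlinarith [hcross, hη_sq, hθ_sq, hD_sq]

theorem norm_starProjection_sub_step_le (h : IsWeightNear X θ N N₀ b) (hb : 0 ≤ b)
    (hsum : ∑ c ∈ X, θ c = 1) (hρ : 0 ≤ ρ) (hη : ∑ c ∈ X, |η c| ≤ κ * ‖v‖)
    (hy : ∀ c ∈ X, η c ≠ 0 → ‖y c‖ ≤ ρ) :
    ‖N₀.starProjection (v - (∑ c ∈ X, θ c • (N c).starProjection v + ∑ c ∈ X, η c • y c))‖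
      ≤ (b + κ * ρ) * ‖v‖ := by
  have hsplit : v - (∑ c ∈ X, θ c • (N c).starProjection v + ∑ c ∈ X, η c • y c)
      = ∑ c ∈ X, θ c • (N c)ᗮ.starProjection v - ∑ c ∈ X, η c • y c := by
    simp only [Submodule.starProjection_orthogonal_val, smul_sub, Finset.sum_sub_distrib,
      ← Finset.sum_smul, hsum, one_smul, sub_sub]
  have hθ : ‖N₀.starProjection (∑ c ∈ X, θ c • (N c)ᗮ.starProjection v)‖ ≤ b * ‖v‖ := by
    simp only [map_sum, map_smul]
    exact norm_sum_smul_le_of_sum_le_one (by positivity) h.nonneg h.sum_le_one fun c hc hc0 =>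
      norm_starProjection_starProjection_orthogonal_le (h.gap_le c hc hc0) v
  have hη' := (N₀.norm_starProjection_apply_le _).trans
    ((norm_sum_smul_le_sum_abs_mul hy).trans (mul_le_mul_of_nonneg_right hη hρ))
  rw [hsplit, map_sub]
  exact (norm_sub_le _ _).trans (by linarith)

end IsWeightNear

end AveragedSteps

section Approximation

variable {H : Type*} [NormedAddCommGroup H] [InnerProductSpace ℝ H] {E : Set H} {x c : H}
  {L L' : Submodule ℝ H} {ρ ρ' η η' κ : ℝ}

/-- Near `x`, the plane through `x` with direction `L` lies in the `η`-neighbourhood of `E`. -/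
def Fills (E : Set H) (x : H) (L : Submodule ℝ H) (ρ η : ℝ) : Prop :=
  ∀ v ∈ L, ‖v‖ < ρ → ∃ y ∈ E, ‖y - (x + v)‖ ≤ η

theorem Fills.mono (h : Fills E x L ρ η) (hρ : ρ' ≤ ρ) (hη : η ≤ η') : Fills E x L ρ' η' :=
  fun v hv hvρ => (h v hv (hvρ.trans_le hρ)).imp fun _ hy => ⟨hy.1, hy.2.trans hη⟩

theorem exists_mem_starProjection_eq [FiniteDimensional ℝ L] [FiniteDimensional ℝ L']
    (hdim : Module.finrank ℝ L = Module.finrank ℝ L')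
    (hle : ∀ v ∈ L, ‖v‖ ≤ 2 * ‖L'.starProjection v‖) {u : H} (hu : u ∈ L') :
    ∃ v ∈ L, L'.starProjection v = u := by
  set f : L →ₗ[ℝ] L' := (L'.orthogonalProjectionOnto : H →ₗ[ℝ] L').comp L.subtype
  have hf : ∀ v : L, (f v : H) = L'.starProjection v := fun _ => rfl
  have hinj : Function.Injective f := (injective_iff_map_eq_zero f).2 fun v hv => by
    have hv0 := hle v v.2
    rw [← hf, hv] at hv0
    exact Subtype.ext (norm_le_zero_iff.1 (by simpa using hv0))
  obtain ⟨v, hv⟩ := (LinearMap.injective_iff_surjective_of_finrank_eq_finrank hdim).1 hinj ⟨u, hu⟩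
  exact ⟨v, v.2, by rw [← hf, hv]⟩

variable [L.HasOrthogonalProjection] [L'.HasOrthogonalProjection]

/-- Near `x`, the set `E` lies in the `η`-neighbourhood of the plane through `x` with direction
`L`. -/
def Fits (E : Set H) (x : H) (L : Submodule ℝ H) [L.HasOrthogonalProjection] (ρ η : ℝ) : Prop :=
  ∀ y ∈ E, ‖y - x‖ < ρ → ‖Lᗮ.starProjection (y - x)‖ ≤ η

theorem Fits.mono (h : Fits E x L ρ η) (hρ : ρ' ≤ ρ) (hη : η ≤ η') : Fits E x L ρ' η' :=
  fun y hy hyx => (h y hy (hyx.trans_le hρ)).trans hη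

theorem Fits.of_near (h : Fits E x L ρ η) (hc : c ∈ E) (hρ' : 0 < ρ') (hρ : ‖c - x‖ + ρ' ≤ ρ) :
    Fits E c L ρ' (2 * η) := fun y hy hyc => by
  have hyx := norm_sub_le_norm_sub_add_norm_sub y c x
  rw [← sub_sub_sub_cancel_right y c x, map_sub, two_mul]
  exact (norm_sub_le _ _).trans (add_le_add (h y hy (by linarith)) (h c hc (by linarith)))

theorem Fills.of_near (h : Fills E x L ρ η) (hc : ‖Lᗮ.starProjection (c - x)‖ ≤ η')
    (hρ : ‖c - x‖ + ρ' ≤ ρ) : Fills E c L ρ' (η + η') := fun v hv hvρ => by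
  have hnorm : ‖L.starProjection (c - x) + v‖ < ρ := by
    linarith [norm_add_le (L.starProjection (c - x)) v, L.norm_starProjection_apply_le (c - x)]
  obtain ⟨y, hy, hyv⟩ := h _ (L.add_mem (L.starProjection_apply_mem _) hv) hnorm
  refine ⟨y, hy, ?_⟩
  have hsplit : y - (c + v)
      = (y - (x + (L.starProjection (c - x) + v))) - Lᗮ.starProjection (c - x) := by
    rw [Submodule.starProjection_orthogonal_val]; abel
  rw [hsplit]
  exact (norm_sub_le _ _).trans (add_le_add hyv hc)

theorem Fills.norm_starProjection_orthogonal_le (h : Fills E x L ρ (ρ / 3))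
    (hL : Fits E x L (2 * ρ) η) (hL' : Fits E x L' (2 * ρ) η') {v : H} (hv : v ∈ L)
    (hvρ : ‖v‖ < ρ) :
    ‖L'ᗮ.starProjection v‖ ≤ η' + η + ‖L'ᗮ.starProjection ∘L L.starProjection‖ * (ρ / 3) := by
  obtain ⟨y, hy, hyv⟩ := h v hv hvρ
  have htri := norm_le_norm_add_norm_sub' (y - x) v
  rw [sub_sub] at htri
  have hyx : ‖y - x‖ < 2 * ρ := by linarith [norm_nonneg v]
  have hperp : Lᗮ.starProjection (y - (x + v)) = Lᗮ.starProjection (y - x) := by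
    rw [← sub_sub, map_sub, Submodule.starProjection_orthogonal_apply_eq_zero hv, sub_zero]
  have hsplit : L'ᗮ.starProjection v = L'ᗮ.starProjection (y - x)
      - L'ᗮ.starProjection (Lᗮ.starProjection (y - x))
      - (L'ᗮ.starProjection ∘L L.starProjection) (y - (x + v)) := by
    rw [ContinuousLinearMap.comp_apply, sub_sub, ← hperp, ← map_add, add_comm,
      L.starProjection_add_starProjection_orthogonal, ← map_sub]
    congr 1; abel
  rw [hsplit]
  exact (norm_sub_le _ _).trans (add_le_add ((norm_sub_le _ _).trans (add_le_add (hL' y hy hyx)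
    ((L'ᗮ.norm_starProjection_apply_le _).trans (hL y hy hyx))))
    (ContinuousLinearMap.le_opNorm_of_le _ hyv))

theorem Fills.mul_norm_starProjection_comp_le (hρ : 0 < ρ) (h : Fills E x L ρ (ρ / 3))
    (hL : Fits E x L (2 * ρ) η) (hL' : Fits E x L' (2 * ρ) η') :
    ρ * ‖L'ᗮ.starProjection ∘L L.starProjection‖ ≤ 3 / 2 * (η + η') := by
  set T := L'ᗮ.starProjection ∘L L.starProjection
  have hT : ‖T‖ ≤ (η' + η + ‖T‖ * (ρ / 3)) / ρ := by
    rw [← T.sSup_unit_ball_eq_norm]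
    refine csSup_le ((nonempty_ball.2 one_pos).image _) ?_
    rintro _ ⟨z, hz, rfl⟩
    rw [mem_ball_zero_iff] at hz
    have hnorm : ‖ρ • L.starProjection z‖ < ρ := by
      rw [norm_smul, Real.norm_of_nonneg hρ.le]
      exact mul_lt_of_lt_one_right hρ ((L.norm_starProjection_apply_le z).trans_lt hz)
    have hle := h.norm_starProjection_orthogonal_le hL hL'
      (L.smul_mem ρ (L.starProjection_apply_mem z)) hnorm
    rw [map_smul, norm_smul, Real.norm_of_nonneg hρ.le, mul_comm] at hle
    rw [T.sSup_unit_ball_eq_norm, le_div_iff₀ hρ]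
    exact hle
  rw [le_div_iff₀ hρ] at hT
  linarith

theorem Fills.mul_gap_le [CompleteSpace H] {x' : H} {η₁ η₂ η₁' η₂' : ℝ} (hρ : 0 < ρ)
    (h : Fills E x L ρ (ρ / 3)) (h₁ : Fits E x L (2 * ρ) η₁) (h₂ : Fits E x L' (2 * ρ) η₂)
    (h' : Fills E x' L' ρ (ρ / 3)) (h₁' : Fits E x' L' (2 * ρ) η₁')
    (h₂' : Fits E x' L (2 * ρ) η₂') :
    ρ * gap L L' ≤ 3 / 2 * (η₁ + η₂ + η₁' + η₂') := by
  linarith [mul_le_mul_of_nonneg_left (gap_le_norm_comp_add_norm_comp L L') hρ.le,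
    h.mul_norm_starProjection_comp_le hρ h₁ h₂, h'.mul_norm_starProjection_comp_le hρ h₁' h₂']

theorem Fills.of_norm_starProjection_comp_le [FiniteDimensional ℝ L] [FiniteDimensional ℝ L']
    (h : Fills E x L (2 * ρ) η) (hdim : Module.finrank ℝ L = Module.finrank ℝ L')
    (hL : ‖L'ᗮ.starProjection ∘L L.starProjection‖ ≤ κ) (hκ : κ ≤ 1 / 2) :
    Fills E x L' ρ (η + κ * (2 * ρ)) := by
  have hperp : ∀ v ∈ L, ‖L'ᗮ.starProjection v‖ ≤ κ * ‖v‖ := fun v hv => by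
    have hTv := ContinuousLinearMap.le_of_opNorm_le _ hL v
    rwa [ContinuousLinearMap.comp_apply, Submodule.starProjection_eq_self_iff.2 hv] at hTv
  have hle : ∀ v ∈ L, ‖v‖ ≤ 2 * ‖L'.starProjection v‖ := fun v hv => by
    have htri := norm_add_le (L'.starProjection v) (L'ᗮ.starProjection v)
    rw [Submodule.starProjection_add_starProjection_orthogonal] at htri
    nlinarith [hperp v hv, norm_nonneg v]
  intro u hu huρ
  obtain ⟨v, hv, rfl⟩ := exists_mem_starProjection_eq hdim hle hu
  have hvρ : ‖v‖ < 2 * ρ := by linarith [hle v hv]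
  obtain ⟨y, hyE, hyv⟩ := h v hv hvρ
  refine ⟨y, hyE, ?_⟩
  have hsplit : y - (x + L'.starProjection v) = (y - (x + v)) + L'ᗮ.starProjection v := by
    rw [Submodule.starProjection_orthogonal_val]; abel
  rw [hsplit]
  exact (norm_add_le _ _).trans (add_le_add hyv ((hperp v hv).trans
    (mul_le_mul_of_nonneg_left hvρ.le ((norm_nonneg _).trans hL))))

end Approximation

section Cutoffs

theorem exists_abs_deriv_smoothTransition_le :
    ∃ B : ℝ, 0 ≤ B ∧ ∀ x, |deriv Real.smoothTransition x| ≤ B := by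
  have hcont : Continuous (deriv Real.smoothTransition) :=
    (Real.smoothTransition.contDiff (n := 1)).continuous_deriv le_rfl
  obtain ⟨B, hB⟩ := (isCompact_Icc (a := (0 : ℝ)) (b := 1)).exists_bound_of_continuousOn
    hcont.continuousOn
  have hB0 : 0 ≤ B := (norm_nonneg _).trans (hB 0 (by simp))
  refine ⟨B, hB0, fun x => ?_⟩
  by_cases hx : x ∈ Icc (0 : ℝ) 1
  · exact hB x hx
  · have hderiv : deriv Real.smoothTransition x = 0 := by
      rw [mem_Icc, not_and_or, not_le, not_le] at hx
      rcases hx with hx | hx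
      · refine IsLocalMin.deriv_eq_zero (.of_forall fun y => ?_)
        rw [Real.smoothTransition.zero_of_nonpos hx.le]
        exact Real.smoothTransition.nonneg y
      · refine IsLocalMax.deriv_eq_zero (.of_forall fun y => ?_)
        rw [Real.smoothTransition.one_of_one_le hx.le]
        exact Real.smoothTransition.le_one y
    rwa [hderiv, abs_zero]

/-- A differentiable cutoff with derivative at most `B`, equal to `1` on `(-∞, 9/16]` and to `0` on
`[1, ∞)`. It is applied to squared distances, whence the threshold `9/16 = (3/4)²`. -/
structure IsCutoff (χ : ℝ → ℝ) (B : ℝ) : Prop where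
  differentiable : Differentiable ℝ χ
  nonneg : ∀ x, 0 ≤ χ x
  le_one : ∀ x, χ x ≤ 1
  eq_one : ∀ x, x ≤ 9 / 16 → χ x = 1
  eq_zero : ∀ x, 1 ≤ x → χ x = 0
  abs_deriv_le : ∀ x, |deriv χ x| ≤ B

theorem exists_isCutoff : ∃ (χ : ℝ → ℝ) (B : ℝ), IsCutoff χ B := by
  obtain ⟨B, hB0, hB⟩ := exists_abs_deriv_smoothTransition_le
  have hd : Differentiable ℝ Real.smoothTransition :=
    (Real.smoothTransition.contDiff (n := 1)).differentiable one_ne_zero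
  have hderiv : ∀ x : ℝ, HasDerivAt (fun x => Real.smoothTransition ((1 - x) * (16 / 7)))
      (deriv Real.smoothTransition ((1 - x) * (16 / 7)) * (-1 * (16 / 7))) x := fun x =>
    (hd _).hasDerivAt.comp x (((hasDerivAt_id x).const_sub 1).mul_const (16 / 7))
  refine ⟨fun x => Real.smoothTransition ((1 - x) * (16 / 7)), 3 * B,
    fun x => (hderiv x).differentiableAt, fun x => Real.smoothTransition.nonneg _,
    fun x => Real.smoothTransition.le_one _,
    fun x hx => Real.smoothTransition.one_of_one_le (by linarith),
    fun x hx => Real.smoothTransition.zero_of_nonpos (by linarith), fun x => ?_⟩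
  have habs : |(-1 * (16 / 7) : ℝ)| = 16 / 7 := by norm_num
  rw [(hderiv x).deriv, abs_mul, habs]
  linarith [hB ((1 - x) * (16 / 7))]

namespace IsCutoff

variable {χ : ℝ → ℝ} {B : ℝ}

theorem bound_nonneg (hχ : IsCutoff χ B) : 0 ≤ B := (abs_nonneg _).trans (hχ.abs_deriv_le 0)

theorem mono {B' : ℝ} (hχ : IsCutoff χ B) (hB : B ≤ B') : IsCutoff χ B' :=
  { hχ with abs_deriv_le := fun x => (hχ.abs_deriv_le x).trans hB }

variable {H : Type*} [NormedAddCommGroup H] {ρ : ℝ}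

theorem comp_norm_sq_eq_zero (hχ : IsCutoff χ B) (hρ : 0 < ρ) {c z : H} (h : ρ ≤ ‖z - c‖) :
    χ ((ρ ^ 2)⁻¹ * ‖z - c‖ ^ 2) = 0 := by
  refine hχ.eq_zero _ ((le_inv_mul_iff₀ (by positivity)).2 ?_)
  rw [mul_one]
  exact pow_le_pow_left₀ hρ.le h 2

variable [InnerProductSpace ℝ H]

theorem hasFDerivAt_comp_norm_sq (hχ : IsCutoff χ B) (c z : H) (ρ : ℝ) :
    HasFDerivAt (fun z => χ ((ρ ^ 2)⁻¹ * ‖z - c‖ ^ 2))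
      (deriv χ ((ρ ^ 2)⁻¹ * ‖z - c‖ ^ 2) • ((ρ ^ 2)⁻¹ • (2 • innerSL ℝ (z - c)))) z :=
  (hχ.differentiable ((ρ ^ 2)⁻¹ * ‖z - c‖ ^ 2)).hasDerivAt.comp_hasFDerivAt z
    (((hasFDerivAt_id (𝕜 := ℝ) z).sub_const c).norm_sq.const_mul ((ρ ^ 2)⁻¹))

theorem norm_fderiv_comp_norm_sq_le (hχ : IsCutoff χ B) (hρ : 0 < ρ) (c z : H) :
    ‖fderiv ℝ (fun z => χ ((ρ ^ 2)⁻¹ * ‖z - c‖ ^ 2)) z‖ ≤ 2 * B / ρ := by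
  have hB := hχ.bound_nonneg
  rcases le_or_gt ρ ‖z - c‖ with hfar | hnear
  · have hzero : fderiv ℝ (fun z => χ ((ρ ^ 2)⁻¹ * ‖z - c‖ ^ 2)) z = 0 :=
      IsLocalMin.fderiv_eq_zero (.of_forall fun y => by
        beta_reduce
        rw [hχ.comp_norm_sq_eq_zero hρ hfar]
        exact hχ.nonneg _)
    rw [hzero, norm_zero]
    positivity
  · rw [(hχ.hasFDerivAt_comp_norm_sq c z ρ).fderiv]
    calc ‖deriv χ ((ρ ^ 2)⁻¹ * ‖z - c‖ ^ 2) • ((ρ ^ 2)⁻¹ • (2 • innerSL ℝ (z - c)))‖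
        = |deriv χ ((ρ ^ 2)⁻¹ * ‖z - c‖ ^ 2)| * ((ρ ^ 2)⁻¹ * (2 * ‖z - c‖)) := by
          rw [norm_smul, norm_smul, ← Nat.cast_smul_eq_nsmul ℝ, norm_smul, innerSL_apply_norm,
            Real.norm_eq_abs, Real.norm_of_nonneg (by positivity : 0 ≤ (ρ ^ 2)⁻¹)]
          norm_num
      _ ≤ B * ((ρ ^ 2)⁻¹ * (2 * ρ)) :=
          mul_le_mul (hχ.abs_deriv_le _) (by gcongr) (by positivity) hB
      _ = 2 * B / ρ := by field_simp

end IsCutoff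

end Cutoffs

section PartitionsOfUnity

variable {H ι : Type*}

section Algebra

variable [LinearOrder ι]

/-- The partition of unity subordinate to the bumps `φ c`, `c ∈ X`, in which each point distributes
its mass over the bumps in increasing order of their index. -/
def bumpPartition (φ : ι → H → ℝ) (X : Finset ι) (c : ι) (z : H) : ℝ :=
  φ c z * ∏ j ∈ X with j < c, (1 - φ j z)

variable {φ : ι → H → ℝ} {X : Finset ι}

theorem sum_bumpPartition (z : H) :
    ∑ c ∈ X, bumpPartition φ X c z = 1 - ∏ c ∈ X, (1 - φ c z) := by
  rw [Finset.prod_one_sub_ordered, sub_sub_cancel]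
  rfl

theorem sum_bumpPartition_eq_one {c : ι} {z : H} (hc : c ∈ X) (h : φ c z = 1) :
    ∑ c ∈ X, bumpPartition φ X c z = 1 := by
  rw [sum_bumpPartition, Finset.prod_eq_zero hc (by rw [h, sub_self]), sub_zero]

theorem bumpPartition_nonneg (h0 : ∀ c z, 0 ≤ φ c z) (h1 : ∀ c z, φ c z ≤ 1) (c : ι) (z : H) :
    0 ≤ bumpPartition φ X c z :=
  mul_nonneg (h0 c z) (Finset.prod_nonneg fun j _ => sub_nonneg.2 (h1 j z))

theorem sum_bumpPartition_le_one (h1 : ∀ c z, φ c z ≤ 1) (z : H) :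
    ∑ c ∈ X, bumpPartition φ X c z ≤ 1 := by
  rw [sum_bumpPartition]
  exact sub_le_self _ (Finset.prod_nonneg fun j _ => sub_nonneg.2 (h1 j z))

end Algebra

variable [NormedAddCommGroup H] [NormedSpace ℝ H]

theorem norm_fderiv_prod_le {f : ι → H → ℝ} {X : Finset ι} {z : H}
    (hd : ∀ c ∈ X, DifferentiableAt ℝ (f c) z) (h0 : ∀ c ∈ X, 0 ≤ f c z)
    (h1 : ∀ c ∈ X, f c z ≤ 1) :
    ‖fderiv ℝ (fun z => ∏ c ∈ X, f c z) z‖ ≤ ∑ c ∈ X, ‖fderiv ℝ (f c) z‖ := by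
  classical
  rw [(HasFDerivAt.finsetProd fun c hc => (hd c hc).hasFDerivAt).fderiv]
  refine norm_sum_le_of_le _ fun c _ => ?_
  rw [norm_smul, Real.norm_of_nonneg
    (Finset.prod_nonneg fun j hj => h0 j (Finset.mem_of_mem_erase hj))]
  exact mul_le_of_le_one_left (norm_nonneg _) (Finset.prod_le_one
    (fun j hj => h0 j (Finset.mem_of_mem_erase hj)) fun j hj => h1 j (Finset.mem_of_mem_erase hj))

variable [LinearOrder ι] {φ : ι → H → ℝ} {X : Finset ι}

theorem differentiable_bumpPartition (hd : ∀ c, Differentiable ℝ (φ c)) (c : ι) :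
    Differentiable ℝ (bumpPartition φ X c) := fun z =>
  (hd c z).mul (HasFDerivAt.finsetProd fun j _ =>
    ((hd j z).const_sub 1).hasFDerivAt).differentiableAt

theorem norm_fderiv_bumpPartition_le (hd : ∀ c, Differentiable ℝ (φ c)) (h0 : ∀ c z, 0 ≤ φ c z)
    (h1 : ∀ c z, φ c z ≤ 1) {c : ι} (hc : c ∈ X) (z : H) :
    ‖fderiv ℝ (bumpPartition φ X c) z‖ ≤ ∑ j ∈ X, ‖fderiv ℝ (φ j) z‖ := by
  set p : H → ℝ := fun z => ∏ j ∈ X with j < c, (1 - φ j z)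
  have hp_nonneg : 0 ≤ p z := Finset.prod_nonneg fun j _ => sub_nonneg.2 (h1 j z)
  have hp_le : p z ≤ 1 :=
    Finset.prod_le_one (fun j _ => sub_nonneg.2 (h1 j z)) fun j _ => sub_le_self _ (h0 j z)
  have hp_diff : DifferentiableAt ℝ p z :=
    (HasFDerivAt.finsetProd fun j _ => ((hd j z).const_sub 1).hasFDerivAt).differentiableAt
  have hp_fderiv : ‖fderiv ℝ p z‖ ≤ ∑ j ∈ X with j < c, ‖fderiv ℝ (φ j) z‖ := by
    simpa only [fderiv_const_sub, norm_neg] using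
      norm_fderiv_prod_le (X := X.filter (· < c)) (fun j _ => (hd j z).const_sub 1)
        (fun j _ => sub_nonneg.2 (h1 j z)) fun j _ => sub_le_self _ (h0 j z)
  have hfderiv : fderiv ℝ (bumpPartition φ X c) z = φ c z • fderiv ℝ p z + p z • fderiv ℝ (φ c) z :=
    fderiv_fun_mul (hd c z) hp_diff
  calc ‖fderiv ℝ (bumpPartition φ X c) z‖
      ≤ φ c z * ‖fderiv ℝ p z‖ + p z * ‖fderiv ℝ (φ c) z‖ := by
        rw [hfderiv]
        refine norm_add_le_of_le ?_ ?_ <;> rw [norm_smul, Real.norm_of_nonneg]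
        exacts [h0 c z, hp_nonneg]
    _ ≤ ∑ j ∈ X with j < c, ‖fderiv ℝ (φ j) z‖ + ‖fderiv ℝ (φ c) z‖ :=
        add_le_add ((mul_le_of_le_one_left (norm_nonneg _) (h1 c z)).trans hp_fderiv)
          (mul_le_of_le_one_left (norm_nonneg _) hp_le)
    _ = ∑ j ∈ insert c (X.filter (· < c)), ‖fderiv ℝ (φ j) z‖ := by
        rw [Finset.sum_insert (by simp), add_comm]
    _ ≤ ∑ j ∈ X, ‖fderiv ℝ (φ j) z‖ :=
        Finset.sum_le_sum_of_subset_of_nonneg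
          (Finset.insert_subset hc (Finset.filter_subset _ _)) fun j _ _ => norm_nonneg _

theorem sum_norm_fderiv_bumpPartition_le (hd : ∀ c, Differentiable ℝ (φ c))
    (h0 : ∀ c z, 0 ≤ φ c z) (h1 : ∀ c z, φ c z ≤ 1) {B : ℝ}
    (hB : ∀ c z, ‖fderiv ℝ (φ c) z‖ ≤ B) (z : H) :
    ∑ c ∈ X, ‖fderiv ℝ (bumpPartition φ X c) z‖ ≤ (X.filter (φ · z ≠ 0)).card ^ 2 * B := by
  have hzero {f : H → ℝ} (hf : ∀ y, 0 ≤ f y) (hfz : f z = 0) : ‖fderiv ℝ f z‖ = 0 := by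
    rw [norm_eq_zero]
    exact IsLocalMin.fderiv_eq_zero (.of_forall fun y => hfz ▸ hf y)
  have hφ : ∑ j ∈ X, ‖fderiv ℝ (φ j) z‖ ≤ (X.filter (φ · z ≠ 0)).card * B := by
    rw [← Finset.sum_filter_of_ne (p := (φ · z ≠ 0)) fun j _ => mt (hzero (h0 j)), ← nsmul_eq_mul]
    exact Finset.sum_le_card_nsmul _ _ _ fun j _ => hB j z
  rw [← Finset.sum_filter_of_ne (p := (φ · z ≠ 0)) fun c _ =>
      mt fun hc => hzero (bumpPartition_nonneg h0 h1 c) (by rw [bumpPartition, hc, zero_mul]),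
    pow_two, mul_assoc, ← nsmul_eq_mul]
  exact Finset.sum_le_card_nsmul _ _ _ fun c hc =>
    (norm_fderiv_bumpPartition_le hd h0 h1 (Finset.mem_filter.1 hc).1 z).trans hφ

end PartitionsOfUnity

section Nets

variable {H : Type*} [NormedAddCommGroup H]

theorem exists_finset_separated_net {E : Set H} (hE : IsCompact E) {ρ : ℝ} (hρ : 0 < ρ) :
    ∃ X : Finset H, (X : Set H) ⊆ E ∧
      (∀ c ∈ X, ∀ c' ∈ X, c ≠ c' → ρ ≤ ‖c - c'‖) ∧ ∀ e ∈ E, ∃ c ∈ X, ‖e - c‖ ≤ ρ := by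
  lift ρ to NNReal using hρ.le
  have hρ' : ρ / 2 ≠ 0 := (half_pos (NNReal.coe_pos.1 hρ)).ne'
  obtain ⟨N, -, hNf, hN⟩ := exists_finite_isCover_of_isCompact hρ' hE
  have hfin : packingNumber ρ E ≠ ⊤ := by
    have hle := packingNumber_two_mul_le_externalCoveringNumber (ρ / 2) E
    rw [mul_div_cancel₀ _ two_ne_zero] at hle
    exact ((hle.trans (hN.externalCoveringNumber_le_encard)).trans_lt hNf.encard_lt_top).ne
  have hXf : (maximalSeparatedSet ρ E).Finite := by
    rw [← Set.encard_lt_top_iff, encard_maximalSeparatedSet hfin]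
    exact hfin.lt_top
  refine ⟨hXf.toFinset, by rw [hXf.coe_toFinset]; exact maximalSeparatedSet_subset,
    fun c hc c' hc' hne => ?_, fun e he => ?_⟩
  · have h : (ρ : ENNReal) < edist c c' := isSeparated_maximalSeparatedSet (hXf.mem_toFinset.1 hc)
      (hXf.mem_toFinset.1 hc') hne
    rw [edist_nndist] at h
    rw [← dist_eq_norm, ← coe_nndist]
    exact_mod_cast h.le
  · obtain ⟨c, hc, h⟩ := isCover_maximalSeparatedSet hfin he
    refine ⟨c, hXf.mem_toFinset.2 hc, ?_⟩
    have h' : edist e c ≤ ρ := h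
    rw [edist_nndist] at h'
    rw [← dist_eq_norm, ← coe_nndist]
    exact_mod_cast h'

variable [NormedSpace ℝ H]

theorem card_le_of_separated [FiniteDimensional ℝ H] {Y : Finset H} {ρ : ℝ}
    (hρ : 0 < ρ) (hsep : ∀ c ∈ Y, ∀ c' ∈ Y, c ≠ c' → ρ ≤ ‖c - c'‖) {z : H}
    (hY : ∀ c ∈ Y, ‖z - c‖ ≤ 2 * ρ) : Y.card ≤ 5 ^ Module.finrank ℝ H := by
  classical
  have hinj : Function.Injective fun c : H => ρ⁻¹ • (c - z) := fun c c' h => by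
    simpa [hρ.ne'] using h
  rw [← Finset.card_image_of_injective Y hinj]
  refine Besicovitch.card_le_of_separated _ (fun x hx => ?_) fun x hx y hy hxy => ?_
  · obtain ⟨c, hc, rfl⟩ := Finset.mem_image.1 hx
    rw [norm_smul, norm_inv, Real.norm_of_nonneg hρ.le, norm_sub_rev, inv_mul_le_iff₀ hρ]
    linarith [hY c hc]
  · obtain ⟨c, hc, rfl⟩ := Finset.mem_image.1 hx
    obtain ⟨c', hc', rfl⟩ := Finset.mem_image.1 hy
    rw [← smul_sub, norm_smul, norm_inv, Real.norm_of_nonneg hρ.le, sub_sub_sub_cancel_right,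
      le_inv_mul_iff₀ hρ, mul_one]
    exact hsep c hc c' hc' fun h => hxy (by rw [h])

/-- The functions `θ c`, `c ∈ X`, form a partition of unity at scale `r` near `E`, subordinate to
balls centred at the points of the net `X ⊆ E`; `K` bounds the derivatives. -/
structure IsNetPartition (E : Set H) (r K : ℝ) (X : Finset H) (θ : H → H → ℝ) : Prop where
  subset : (X : Set H) ⊆ E
  differentiable : ∀ c, Differentiable ℝ (θ c)
  nonneg : ∀ c z, 0 ≤ θ c z
  sum_le_one : ∀ z, ∑ c ∈ X, θ c z ≤ 1
  sum_eq_one : ∀ e ∈ E, ∀ z, ‖z - e‖ ≤ 10 * r → ∑ c ∈ X, θ c z = 1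
  norm_sub_le : ∀ c ∈ X, ∀ z, θ c z ≠ 0 → ‖z - c‖ ≤ 40 * r
  sum_norm_fderiv_le : ∀ z, ∑ c ∈ X, ‖fderiv ℝ (θ c) z‖ ≤ K / r

namespace IsNetPartition

variable {E : Set H} {r K : ℝ} {X : Finset H} {θ : H → H → ℝ}

theorem ne_zero_of_fderiv_ne_zero (hθ : IsNetPartition E r K X θ) {c z v : H}
    (h : fderiv ℝ (θ c) z v ≠ 0) : θ c z ≠ 0 := fun hc => h <| by
  rw [IsLocalMin.fderiv_eq_zero (.of_forall fun y => by rw [hc]; exact hθ.nonneg c y)]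
  rfl

theorem sum_abs_fderiv_apply_le (hθ : IsNetPartition E r K X θ) (z v : H) :
    ∑ c ∈ X, |fderiv ℝ (θ c) z v| ≤ K / r * ‖v‖ :=
  calc ∑ c ∈ X, |fderiv ℝ (θ c) z v| ≤ ∑ c ∈ X, ‖fderiv ℝ (θ c) z‖ * ‖v‖ :=
        Finset.sum_le_sum fun c _ => (fderiv ℝ (θ c) z).le_opNorm v
    _ = (∑ c ∈ X, ‖fderiv ℝ (θ c) z‖) * ‖v‖ := (Finset.sum_mul ..).symm
    _ ≤ K / r * ‖v‖ := mul_le_mul_of_nonneg_right (hθ.sum_norm_fderiv_le z) (norm_nonneg v)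

end IsNetPartition

end Nets

theorem IsCutoff.exists_isNetPartition {H : Type*} [NormedAddCommGroup H]
    [InnerProductSpace ℝ H] [FiniteDimensional ℝ H] {χ : ℝ → ℝ} {B : ℝ} (hχ : IsCutoff χ B)
    {E : Set H} (hE : IsCompact E) {r : ℝ} (hr : 0 < r) :
    ∃ X θ, IsNetPartition E r (25 ^ Module.finrank ℝ H * B) X θ := by
  let _ : LinearOrder H := IsWellOrder.linearOrder WellOrderingRel
  have hB := hχ.bound_nonneg
  have hρ : 0 < 40 * r := by positivity
  obtain ⟨X, hXE, hsep, hcov⟩ := exists_finset_separated_net hE (by positivity : 0 < 20 * r)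
  set φ : H → H → ℝ := fun c z => χ (((40 * r) ^ 2)⁻¹ * ‖z - c‖ ^ 2)
  have hφd : ∀ c, Differentiable ℝ (φ c) := fun c z =>
    (hχ.hasFDerivAt_comp_norm_sq c z _).differentiableAt
  have hφ0 : ∀ c z, 0 ≤ φ c z := fun c z => hχ.nonneg _
  have hφ1 : ∀ c z, φ c z ≤ 1 := fun c z => hχ.le_one _
  have hsupp : ∀ c z, φ c z ≠ 0 → ‖z - c‖ ≤ 40 * r := fun c z => by
    contrapose!
    exact fun h => hχ.comp_norm_sq_eq_zero hρ h.le
  refine ⟨X, bumpPartition φ X, hXE, differentiable_bumpPartition hφd,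
    bumpPartition_nonneg hφ0 hφ1, sum_bumpPartition_le_one hφ1, fun e he z hze => ?_,
    fun c _ z h => hsupp c z (left_ne_zero_of_mul h), fun z => ?_⟩
  · obtain ⟨c, hc, hec⟩ := hcov e he
    refine sum_bumpPartition_eq_one hc (hχ.eq_one _ ((inv_mul_le_iff₀ (by positivity)).2 ?_))
    have hzc : ‖z - c‖ ≤ 30 * r := by linarith [norm_sub_le_norm_sub_add_norm_sub z e c]
    linarith [pow_le_pow_left₀ (norm_nonneg _) hzc 2]
  · have hcard : (X.filter (φ · z ≠ 0)).card ≤ 5 ^ Module.finrank ℝ H :=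
      card_le_of_separated (by positivity : 0 < 20 * r)
        (fun c hc c' hc' => hsep c (Finset.mem_filter.1 hc).1 c' (Finset.mem_filter.1 hc').1)
        fun c hc => by linarith [hsupp c z (Finset.mem_filter.1 hc).2]
    calc ∑ c ∈ X, ‖fderiv ℝ (bumpPartition φ X c) z‖
        ≤ (X.filter (φ · z ≠ 0)).card ^ 2 * (2 * B / (40 * r)) :=
          sum_norm_fderiv_bumpPartition_le hφd hφ0 hφ1
            (fun c z => hχ.norm_fderiv_comp_norm_sq_le hρ c z) z
      _ ≤ (5 ^ Module.finrank ℝ H) ^ 2 * (B / r) := by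
          gcongr ?_ ^ 2 * ?_
          · exact_mod_cast hcard
          · rw [div_le_div_iff₀ hρ hr]
            nlinarith [mul_nonneg hB hr.le]
      _ = 25 ^ Module.finrank ℝ H * B / r := by
          rw [← pow_mul, mul_comm _ 2, pow_mul]
          norm_num
          ring

theorem exists_isCutoff_isNetPartition (H : Type*) [NormedAddCommGroup H] [InnerProductSpace ℝ H]
    [FiniteDimensional ℝ H] :
    ∃ (K : ℝ) (χ : ℝ → ℝ), 1 ≤ K ∧ IsCutoff χ K ∧
      ∀ E : Set H, IsCompact E → ∀ r : ℝ, 0 < r → ∃ X θ, IsNetPartition E r K X θ := by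
  obtain ⟨χ, B, hχ⟩ := exists_isCutoff
  have hmax := hχ.mono (le_max_right 1 B)
  have hone : (1 : ℝ) ≤ 25 ^ Module.finrank ℝ H := one_le_pow₀ (by norm_num)
  exact ⟨25 ^ Module.finrank ℝ H * max 1 B, χ,
    one_le_mul_of_one_le_of_one_le hone (le_max_left 1 B),
    hmax.mono (le_mul_of_one_le_left (zero_le_one.trans (le_max_left 1 B)) hone),
    fun _ hE _ hr => hmax.exists_isNetPartition hE hr⟩

theorem norm_le_of_norm_sub_le_mul {F : Type*} [NormedAddCommGroup F] {x y : F} {ε : ℝ}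
    (hε : ε ≤ 1 / 10) (h : ‖x - y‖ ≤ ε * ‖y‖) :
    ‖x‖ ≤ 11 / 10 * ‖y‖ ∧ ‖y‖ ≤ 10 / 9 * ‖x‖ := by
  have hxy := norm_le_norm_add_norm_sub' x y
  have hyx := norm_le_norm_add_norm_sub x y
  have hmul : ε * ‖y‖ ≤ 1 / 10 * ‖y‖ := mul_le_mul_of_nonneg_right hε (norm_nonneg _)
  constructor <;> linarith

theorem le_mul_of_abs_sub_le {x y q : ℝ} (hx : 0 ≤ x) (hy : 0 ≤ y) (hq₀ : 0 ≤ q) (hq : q ≤ 1 / 2)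
    (h : |y - x| ≤ q * x) : y ≤ Real.exp (2 * q) * x ∧ x ≤ Real.exp (2 * q) * y := by
  have hexp := Real.add_one_le_exp (2 * q)
  obtain ⟨hlow, hup⟩ := abs_le.1 h
  refine ⟨by nlinarith, ?_⟩
  have hinv : x ≤ (1 + 2 * q) * (1 - q) * x := le_mul_of_one_le_left hx (by nlinarith)
  nlinarith [mul_le_mul_of_nonneg_left (by linarith : (1 - q) * x ≤ y)
    (by linarith : 0 ≤ 1 + 2 * q), mul_le_mul_of_nonneg_right hexp hy]

theorem le_exp_sum_mul_of_abs_sub_le {y q : ℕ → ℝ} {N : ℕ} (hy : ∀ i, 0 ≤ y i)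
    (hq₀ : ∀ i < N, 0 ≤ q i) (hq : ∀ i < N, q i ≤ 1 / 2)
    (h : ∀ i < N, |y (i + 1) - y i| ≤ q i * y i) :
    y N ≤ Real.exp (2 * ∑ i ∈ Finset.range N, q i) * y 0 ∧
      y 0 ≤ Real.exp (2 * ∑ i ∈ Finset.range N, q i) * y N := by
  induction N with
  | zero => simp
  | succ N ih =>
    obtain ⟨hup, hlow⟩ := ih (fun i hi => hq₀ i (hi.trans N.lt_succ_self))
      (fun i hi => hq i (hi.trans N.lt_succ_self)) (fun i hi => h i (hi.trans N.lt_succ_self))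
    obtain ⟨hup', hlow'⟩ := le_mul_of_abs_sub_le (hy N) (hy (N + 1)) (hq₀ N N.lt_succ_self)
      (hq N N.lt_succ_self) (h N N.lt_succ_self)
    rw [Finset.sum_range_succ, mul_add, Real.exp_add]
    constructor
    · rw [mul_right_comm, mul_comm _ (Real.exp (2 * q N))]
      exact hup'.trans (mul_le_mul_of_nonneg_left hup (Real.exp_nonneg _))
    · rw [mul_assoc]
      exact hlow.trans (mul_le_mul_of_nonneg_left hlow' (Real.exp_nonneg _))

theorem abs_inner_le_of_norm_sub_le {F : Type*} [NormedAddCommGroup F] [InnerProductSpace ℝ F]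
    {x x' y y' : F} {ε : ℝ} (hε₀ : 0 ≤ ε) (hε : ε ≤ 1 / 100)
    (hinner : |inner ℝ x y| ≤ 1 / 100 * (‖x‖ * ‖y‖)) (hx : ‖x' - x‖ ≤ ε * ‖x‖)
    (hy : ‖y' - y‖ ≤ ε * ‖y‖) : |inner ℝ x' y'| ≤ 1 / 10 * (‖x'‖ * ‖y'‖) := by
  have hsplit : inner ℝ x' y' = inner ℝ x y + (inner ℝ (x' - x) y' + inner ℝ x (y' - y)) := by
    simp only [inner_sub_left, inner_sub_right]; ring
  have hxx' := (norm_le_of_norm_sub_le_mul (hε.trans (by norm_num)) hx).2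
  obtain ⟨hy'y, hyy'⟩ := norm_le_of_norm_sub_le_mul (hε.trans (by norm_num)) hy
  have hfst := (abs_real_inner_le_norm (x' - x) y').trans
    (mul_le_mul hx hy'y (norm_nonneg _) (by positivity))
  have hsnd := (abs_real_inner_le_norm x (y' - y)).trans
    (mul_le_mul_of_nonneg_left hy (norm_nonneg _))
  have hprod : ‖x‖ * ‖y‖ ≤ (10 / 9 * ‖x'‖) * (10 / 9 * ‖y'‖) :=
    mul_le_mul hxx' hyy' (norm_nonneg _) (by positivity)
  have hεxy := mul_le_mul_of_nonneg_right hε (by positivity : 0 ≤ ‖x‖ * ‖y‖)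
  have hsum := abs_add_le (inner ℝ x y) (inner ℝ (x' - x) y' + inner ℝ x (y' - y))
  have hsum' := abs_add_le (inner ℝ (x' - x) y') (inner ℝ x (y' - y))
  rw [hsplit]
  nlinarith [mul_nonneg (norm_nonneg x') (norm_nonneg y')]

/-- Multiscale data attached to a flat set `E`: at scale `r k`, every `e ∈ E` carries an
approximating linear subspace `L k e`, there is a partition of unity `θ k` indexed by a finite net
of `E`, and `β e k` controls the oscillation of the subspaces near `e`. -/
structure FlatSystem (H : Type*) [NormedAddCommGroup H] [InnerProductSpace ℝ H]
    [FiniteDimensional ℝ H] (K δ M : ℝ) where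
  E : Set H
  r : ℕ → ℝ
  base : Submodule ℝ H
  L : ℕ → H → Submodule ℝ H
  net : ℕ → Finset H
  θ : ℕ → H → H → ℝ
  β : H → ℕ → ℝ
  χ : ℝ → ℝ
  one_le_K : 1 ≤ K
  δ_nonneg : 0 ≤ δ
  δ_mul_K_le : δ * K ≤ 1 / 10 ^ 6
  r_pos : ∀ k, 0 < r k
  r_succ : ∀ k, r (k + 1) = r k / 10
  partition : ∀ k, IsNetPartition E (r k) K (net k) (θ k)
  cutoff : IsCutoff χ K
  β_nonneg : ∀ e ∈ E, ∀ k, 0 ≤ β e k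
  β_le : ∀ e ∈ E, ∀ k, β e k ≤ δ
  β_le_two_mul : ∀ e ∈ E, ∀ k, β e k ≤ 2 * β e (k + 1)
  sum_β_sq_le : ∀ e ∈ E, ∀ N, ∑ k ∈ Finset.range N, β e k ^ 2 ≤ M
  gap_le : ∀ e ∈ E, ∀ c ∈ E, ∀ k, ‖c - e‖ ≤ 100 * r k → gap (L k c) (L k e) ≤ β e k
  flat : ∀ e ∈ E, ∀ c ∈ E, ∀ k, ‖c - e‖ ≤ 100 * r k →
    ‖(L k e)ᗮ.starProjection (c - e)‖ ≤ β e k * r k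
  gap_succ_le : ∀ e ∈ E, ∀ k, gap (L (k + 1) e) (L k e) ≤ β e k
  gap_zero_le : ∀ e ∈ E, gap (L 0 e) base ≤ β e 0
  flat_zero : ∀ e ∈ E, ‖baseᗮ.starProjection e‖ ≤ β e 0 * r 0

namespace FlatSystem

variable {H : Type*} [NormedAddCommGroup H] [InnerProductSpace ℝ H] [FiniteDimensional ℝ H]
  {K δ M : ℝ}

section Constants

theorem K_pos (D : FlatSystem H K δ M) : 0 < K := zero_lt_one.trans_le D.one_le_K

theorem K_mul_δ_le (D : FlatSystem H K δ M) : K * δ ≤ 1 / 10 ^ 6 :=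
  (mul_comm K δ).trans_le D.δ_mul_K_le

theorem δ_le_K_mul (D : FlatSystem H K δ M) : δ ≤ K * δ :=
  le_mul_of_one_le_left D.δ_nonneg D.one_le_K

theorem δ_le (D : FlatSystem H K δ M) : δ ≤ 1 / 10 ^ 6 := D.δ_le_K_mul.trans D.K_mul_δ_le

variable (D : FlatSystem H K δ M)

theorem β_le_K_mul {e : H} (he : e ∈ D.E) (k : ℕ) : D.β e k ≤ K * D.β e k :=
  le_mul_of_one_le_left (D.β_nonneg e he k) D.one_le_K

theorem K_mul_β_le {e : H} (he : e ∈ D.E) (k : ℕ) : K * D.β e k ≤ 1 / 10 ^ 6 :=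
  (mul_le_mul_of_nonneg_left (D.β_le e he k) D.K_pos.le).trans D.K_mul_δ_le

theorem r_eq (k : ℕ) : D.r k = D.r 0 * (1 / 10) ^ k := by
  induction k with
  | zero => rw [pow_zero, mul_one]
  | succ k ih => rw [r_succ, ih]; ring

theorem K_div_r_mul (k : ℕ) (x : ℝ) : K / D.r k * (x * D.r k) = K * x := by
  have := (D.r_pos k).ne'
  field_simp

end Constants

variable (D : FlatSystem H K δ M)

section Push

/-- The averaged orthogonal projection onto the approximating planes of scale `k`. -/
def push (k : ℕ) (y : H) : H :=
  y - ∑ c ∈ D.net k, D.θ k c y • (D.L k c)ᗮ.starProjection (y - c)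

theorem hasFDerivAt_push (k : ℕ) (y : H) : HasFDerivAt (D.push k)
    (.id ℝ H - ∑ c ∈ D.net k, (D.θ k c y • (D.L k c)ᗮ.starProjection
      + (fderiv ℝ (D.θ k c) y).smulRight ((D.L k c)ᗮ.starProjection (y - c)))) y :=
  (hasFDerivAt_id y).sub (HasFDerivAt.fun_sum fun c _ =>
    ((D.partition k).differentiable c y).hasFDerivAt.smul
      ((D.L k c)ᗮ.starProjection.hasFDerivAt.comp y ((hasFDerivAt_id y).sub_const c)))

theorem differentiable_push (k : ℕ) : Differentiable ℝ (D.push k) := fun y =>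
  (D.hasFDerivAt_push k y).differentiableAt

theorem fderiv_push_apply (k : ℕ) (y v : H) : fderiv ℝ (D.push k) y v
    = v - (∑ c ∈ D.net k, D.θ k c y • (D.L k c)ᗮ.starProjection v
      + ∑ c ∈ D.net k, fderiv ℝ (D.θ k c) y v • (D.L k c)ᗮ.starProjection (y - c)) := by
  rw [(D.hasFDerivAt_push k y).fderiv]
  simp [Finset.sum_add_distrib]

/-- The point `e` of `E` is close to `y` at scale `k`. -/
def IsAnchor (k : ℕ) (y e : H) : Prop := e ∈ D.E ∧ ‖y - e‖ ≤ 50 * D.r k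

/-- The point `y` is much closer to the approximating planes of scale `k` than `D.r k`. -/
def IsNearPlanes (k : ℕ) (y : H) : Prop :=
  ∀ e, D.IsAnchor k y e → ‖(D.L k e)ᗮ.starProjection (y - e)‖ ≤ 1000 * D.β e k * D.r k

variable {D} {k : ℕ} {c e y v w : H}

theorem isAnchor_of_weight_ne_zero (hc : c ∈ D.net k) (hθ : D.θ k c y ≠ 0) : D.IsAnchor k y c :=
  ⟨(D.partition k).subset hc, by linarith [(D.partition k).norm_sub_le c hc y hθ, D.r_pos k]⟩

theorem isAnchor_of_norm_sub_le (he : e ∈ D.E) (h : ‖y - e‖ ≤ 10 * D.r k) : D.IsAnchor k y e :=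
  ⟨he, by linarith [D.r_pos k]⟩

namespace IsAnchor

theorem norm_net_sub_le (h : D.IsAnchor k y e) (hc : c ∈ D.net k) (hθ : D.θ k c y ≠ 0) :
    ‖c - e‖ ≤ 100 * D.r k := by
  have htri := norm_sub_le_norm_sub_add_norm_sub c y e
  rw [norm_sub_rev c y] at htri
  linarith [(D.partition k).norm_sub_le c hc y hθ, h.2, D.r_pos k]

theorem isWeightNear (h : D.IsAnchor k y e) :
    IsWeightNear (D.net k) (D.θ k · y) (D.L k) (D.L k e) (D.β e k) where
  nonneg c _ := (D.partition k).nonneg c y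
  sum_le_one := (D.partition k).sum_le_one y
  gap_le c hc hθ := D.gap_le e h.1 c ((D.partition k).subset hc) k (h.norm_net_sub_le hc hθ)

theorem norm_starProjection_orthogonal_sub_sub_le (h : D.IsAnchor k y e) (hc : c ∈ D.net k)
    (hθ : D.θ k c y ≠ 0) :
    ‖(D.L k c)ᗮ.starProjection (y - c) - (D.L k e)ᗮ.starProjection (y - e)‖
      ≤ 41 * D.β e k * D.r k := by
  have hyc := mul_le_mul_of_nonneg_left ((D.partition k).norm_sub_le c hc y hθ)
    (D.β_nonneg e h.1 k)
  have hgap := norm_starProjection_orthogonal_sub_le (h.isWeightNear.gap_le c hc hθ) (y - c)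
  have hflat := D.flat e h.1 c ((D.partition k).subset hc) k (h.norm_net_sub_le hc hθ)
  have hsplit : (D.L k c)ᗮ.starProjection (y - c) - (D.L k e)ᗮ.starProjection (y - e)
      = ((D.L k c)ᗮ.starProjection (y - c) - (D.L k e)ᗮ.starProjection (y - c))
        - (D.L k e)ᗮ.starProjection (c - e) := by
    rw [sub_sub, ← map_add]; congr 2; abel
  rw [hsplit]
  exact (norm_sub_le _ _).trans (by linarith)

theorem norm_starProjection_orthogonal_net_sub_le (h : D.IsAnchor k y e)
    (hy : D.IsNearPlanes k y) (hc : c ∈ D.net k) (hθ : D.θ k c y ≠ 0) :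
    ‖(D.L k c)ᗮ.starProjection (y - c)‖ ≤ 1100 * D.β e k * D.r k := by
  have hdiff := h.norm_starProjection_orthogonal_sub_sub_le hc hθ
  have htri := norm_le_norm_add_norm_sub' ((D.L k c)ᗮ.starProjection (y - c))
    ((D.L k e)ᗮ.starProjection (y - e))
  nlinarith [hy e h, mul_nonneg (D.β_nonneg e h.1 k) (D.r_pos k).le]

theorem norm_fderiv_push_sub_le (h : D.IsAnchor k y e) (hy : D.IsNearPlanes k y)
    (hv : ‖(D.L k e)ᗮ.starProjection v‖ ≤ 5000 * K * D.β e k * ‖v‖) :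
    ‖fderiv ℝ (D.push k) y v - v‖ ≤ 6200 * (K * D.β e k) * ‖v‖ := by
  have hβ := D.β_nonneg e h.1 k
  have hr := D.r_pos k
  have hK := D.K_pos
  rw [fderiv_push_apply, sub_sub_cancel_left, norm_neg]
  refine (h.isWeightNear.orthogonal.norm_step_le hβ (by positivity) hv (by positivity)
    ((D.partition k).sum_abs_fderiv_apply_le y v) fun c hc hθ =>
      h.norm_starProjection_orthogonal_net_sub_le hy hc
        ((D.partition k).ne_zero_of_fderiv_ne_zero hθ)).trans ?_
  rw [D.K_div_r_mul]
  exact mul_le_mul_of_nonneg_right (by linarith [D.β_le_K_mul h.1 k]) (norm_nonneg _)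

theorem abs_norm_fderiv_push_sq_sub_le (h : D.IsAnchor k y e) (hy : D.IsNearPlanes k y)
    (hv : ‖(D.L k e)ᗮ.starProjection v‖ ≤ 5000 * K * D.β e k * ‖v‖) :
    |‖fderiv ℝ (D.push k) y v‖ ^ 2 - ‖v‖ ^ 2| ≤ 2 * 10 ^ 8 * (K * D.β e k) ^ 2 * ‖v‖ ^ 2 := by
  have hβ := D.β_nonneg e h.1 k
  have hr := D.r_pos k
  have hK := D.K_pos
  rw [fderiv_push_apply]
  refine (h.isWeightNear.orthogonal.abs_norm_sub_step_sq_sub_le hβ (by positivity) hv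
    (by positivity) (by positivity) ((D.partition k).sum_abs_fderiv_apply_le y v) (fun c hc hθ =>
      h.norm_starProjection_orthogonal_net_sub_le hy hc
        ((D.partition k).ne_zero_of_fderiv_ne_zero hθ))
    (fun c _ => (D.partition k).ne_zero_of_fderiv_ne_zero)
    fun c _ => (D.L k c)ᗮ.starProjection_apply_mem _).trans ?_
  rw [D.K_div_r_mul]
  have hle : (5000 * K + 1) * D.β e k + K * (1100 * D.β e k) ≤ 6200 * (K * D.β e k) := by
    linarith [D.β_le_K_mul h.1 k]
  have hsq := pow_le_pow_left₀ (by positivity) hle 2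
  exact mul_le_mul_of_nonneg_right (by nlinarith [sq_nonneg (K * D.β e k)]) (by positivity)

end IsAnchor

theorem norm_starProjection_orthogonal_fderiv_push_le (he : e ∈ D.E)
    (hye : ‖y - e‖ ≤ 10 * D.r k) (hy : D.IsNearPlanes k y) :
    ‖(D.L k e)ᗮ.starProjection (fderiv ℝ (D.push k) y v)‖ ≤ 1101 * (K * D.β e k) * ‖v‖ := by
  have h := isAnchor_of_norm_sub_le he hye
  have hβ := D.β_nonneg e he k
  have hr := D.r_pos k
  rw [fderiv_push_apply]
  refine (h.isWeightNear.orthogonal.norm_starProjection_sub_step_le hβ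
    ((D.partition k).sum_eq_one e he y hye) (by positivity)
    ((D.partition k).sum_abs_fderiv_apply_le y v) fun c hc hθ =>
      h.norm_starProjection_orthogonal_net_sub_le hy hc
        ((D.partition k).ne_zero_of_fderiv_ne_zero hθ)).trans ?_
  rw [D.K_div_r_mul]
  exact mul_le_mul_of_nonneg_right (by linarith [D.β_le_K_mul he k]) (norm_nonneg _)

theorem norm_starProjection_orthogonal_push_sub_le (he : e ∈ D.E) (hye : ‖y - e‖ ≤ 10 * D.r k) :
    ‖(D.L k e)ᗮ.starProjection (D.push k y - e)‖ ≤ 41 * D.β e k * D.r k := by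
  have hr := D.r_pos k
  have hβ := D.β_nonneg e he k
  have hsum := (D.partition k).sum_eq_one e he y hye
  have hsplit : D.push k y - e = (y - e - (D.L k e)ᗮ.starProjection (y - e))
      - ∑ c ∈ D.net k, D.θ k c y •
        ((D.L k c)ᗮ.starProjection (y - c) - (D.L k e)ᗮ.starProjection (y - e)) := by
    simp only [smul_sub, Finset.sum_sub_distrib, ← Finset.sum_smul, hsum, one_smul, push]
    abel
  rw [hsplit, map_sub, map_sub, starProjection_starProjection, sub_self, zero_sub, norm_neg]
  exact ((D.L k e)ᗮ.norm_starProjection_apply_le _).trans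
    (norm_sum_smul_le_of_sum_le_one (by positivity) (fun c _ => (D.partition k).nonneg c y) hsum.le
      fun c hc hθ =>
        (isAnchor_of_norm_sub_le he hye).norm_starProjection_orthogonal_sub_sub_le hc hθ)

namespace IsNearPlanes

theorem norm_push_sub_le (hy : D.IsNearPlanes k y) :
    ‖D.push k y - y‖ ≤ 1100 * δ * D.r k := by
  have hr := D.r_pos k
  have hδ := D.δ_nonneg
  rw [push, sub_sub_cancel_left, norm_neg]
  refine norm_sum_smul_le_of_sum_le_one (by positivity) (fun c _ => (D.partition k).nonneg c y)
    ((D.partition k).sum_le_one y) fun c hc hθ => ?_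
  have h := isAnchor_of_weight_ne_zero hc hθ
  refine (h.norm_starProjection_orthogonal_net_sub_le hy hc hθ).trans ?_
  exact mul_le_mul_of_nonneg_right
    (mul_le_mul_of_nonneg_left (D.β_le c h.1 k) (by norm_num)) hr.le

theorem norm_sub_le_of_isAnchor_push (hy : D.IsNearPlanes k y)
    (h : D.IsAnchor (k + 1) (D.push k y) e) : ‖y - e‖ ≤ 10 * D.r k := by
  have hstep := hy.norm_push_sub_le
  have htri := norm_sub_le_norm_sub_add_norm_sub y (D.push k y) e
  have hpush := h.2
  rw [norm_sub_rev] at hstep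
  rw [r_succ] at hpush
  nlinarith [D.δ_le, D.r_pos k]

theorem push (hy : D.IsNearPlanes k y) : D.IsNearPlanes (k + 1) (D.push k y) := by
  intro e h
  have hβ := D.β_nonneg e h.1 k
  have hr := D.r_pos k
  have hproj := norm_starProjection_orthogonal_push_sub_le h.1 (hy.norm_sub_le_of_isAnchor_push h)
  have hgap := norm_starProjection_orthogonal_sub_le (D.gap_succ_le e h.1 k) (D.push k y - e)
  have htri := norm_le_norm_add_norm_sub' ((D.L (k + 1) e)ᗮ.starProjection (D.push k y - e))
    ((D.L k e)ᗮ.starProjection (D.push k y - e))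
  have hdist := mul_le_mul_of_nonneg_left h.2 hβ
  rw [r_succ] at *
  nlinarith [mul_nonneg hβ hr.le, mul_le_mul_of_nonneg_right (D.β_le_two_mul e h.1 k) hr.le]

end IsNearPlanes

theorem isNearPlanes_starProjection_base (z : H) :
    D.IsNearPlanes 0 (D.base.starProjection z) := by
  intro e h
  have hβ := D.β_nonneg e h.1 0
  have hr := D.r_pos 0
  have hgap := norm_starProjection_orthogonal_sub_le (D.gap_zero_le e h.1)
    (D.base.starProjection z - e)
  have htri := norm_le_norm_add_norm_sub'
    ((D.L 0 e)ᗮ.starProjection (D.base.starProjection z - e))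
    (D.baseᗮ.starProjection (D.base.starProjection z - e))
  have hbase : D.baseᗮ.starProjection (D.base.starProjection z - e)
      = -D.baseᗮ.starProjection e := by
    rw [map_sub, starProjection_orthogonal_starProjection, zero_sub]
  rw [hbase, norm_neg] at htri
  rw [hbase] at hgap
  nlinarith [D.flat_zero e h.1, mul_le_mul_of_nonneg_left h.2 hβ, mul_nonneg hβ hr.le]

theorem weight_eq_zero_of_forall_not_isAnchor (h : ∀ e, ¬ D.IsAnchor k y e) (hc : c ∈ D.net k) :
    D.θ k c y = 0 := by
  by_contra hθ
  exact h c (isAnchor_of_weight_ne_zero hc hθ)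

theorem fderiv_push_apply_of_forall_not_isAnchor (h : ∀ e, ¬ D.IsAnchor k y e) (v : H) :
    fderiv ℝ (D.push k) y v = v := by
  rw [fderiv_push_apply,
    Finset.sum_eq_zero fun c hc => by rw [weight_eq_zero_of_forall_not_isAnchor h hc, zero_smul],
    Finset.sum_eq_zero fun c hc => smul_eq_zero_of_left (by_contra fun hne =>
      (D.partition k).ne_zero_of_fderiv_ne_zero hne
        (weight_eq_zero_of_forall_not_isAnchor h hc)) _, add_zero, sub_zero]

end Push

section NormalStep

/-- Removes from `w` its averaged component along the approximating planes of scale `k` near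
`y`. -/
def normalStep (k : ℕ) (y w : H) : H :=
  w - ∑ c ∈ D.net k, D.θ k c y • (D.L k c).starProjection w

variable {D} {k : ℕ} {e y w : H}

theorem normalStep_of_forall_not_isAnchor (h : ∀ e, ¬ D.IsAnchor k y e) (w : H) :
    D.normalStep k y w = w := by
  rw [normalStep, Finset.sum_eq_zero fun c hc => by
    rw [weight_eq_zero_of_forall_not_isAnchor h hc, zero_smul], sub_zero]

theorem norm_normalStep_le (k : ℕ) (y w : H) : ‖D.normalStep k y w‖ ≤ ‖w‖ :=
  norm_sub_sum_starProjection_le (fun c _ => (D.partition k).nonneg c y)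
    ((D.partition k).sum_le_one y) w

namespace IsAnchor

theorem norm_normalStep_sub_le (h : D.IsAnchor k y e)
    (hw : ‖(D.L k e).starProjection w‖ ≤ 6 * D.β e k * ‖w‖) :
    ‖D.normalStep k y w - w‖ ≤ 7 * D.β e k * ‖w‖ := by
  rw [normalStep, sub_sub_cancel_left, norm_neg]
  refine (h.isWeightNear.norm_sum_starProjection_le (D.β_nonneg e h.1 k) (by norm_num)
    hw).trans_eq ?_
  norm_num

theorem abs_norm_normalStep_sq_sub_le (h : D.IsAnchor k y e)
    (hw : ‖(D.L k e).starProjection w‖ ≤ 6 * D.β e k * ‖w‖) :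
    |‖D.normalStep k y w‖ ^ 2 - ‖w‖ ^ 2| ≤ 2 * 10 ^ 8 * (K * D.β e k) ^ 2 * ‖w‖ ^ 2 := by
  have hβ := D.β_nonneg e h.1 k
  have hsq := h.isWeightNear.abs_norm_sub_step_sq_sub_le (η := 0) (y := 0) (ρ := 0) (κ := 0) hβ
    (by norm_num) hw le_rfl le_rfl (by simp) (by simp) (by simp) (by simp)
  simp only [Pi.zero_apply, smul_zero, Finset.sum_const_zero, add_zero, mul_zero] at hsq
  refine hsq.trans (mul_le_mul_of_nonneg_right ?_ (by positivity))
  nlinarith [pow_le_pow_left₀ hβ (D.β_le_K_mul h.1 k) 2, sq_nonneg (K * D.β e k)]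

end IsAnchor

theorem norm_starProjection_normalStep_le (he : e ∈ D.E) (hye : ‖y - e‖ ≤ 10 * D.r k) (w : H) :
    ‖(D.L k e).starProjection (D.normalStep k y w)‖ ≤ D.β e k * ‖w‖ := by
  have hstep := (isAnchor_of_norm_sub_le he hye).isWeightNear.norm_starProjection_sub_step_le
    (η := 0) (y := 0) (ρ := 0) (κ := 0) (v := w) (D.β_nonneg e he k)
    ((D.partition k).sum_eq_one e he y hye) le_rfl (by simp) (by simp)
  simpa [normalStep] using hstep

end NormalStep

section Foot

/-- The trajectory of the orthogonal projection of `z` onto the base plane under the maps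
`push`. -/
def foot : ℕ → H → H
  | 0 => D.base.starProjection
  | k + 1 => fun z => D.push k (foot k z)

/-- The derivative of `foot k` at `z` in the direction `h`. -/
def tangent (k : ℕ) (z h : H) : H := fderiv ℝ (D.foot k) z h

/-- The transport of `w` along the trajectory `foot · z` by the maps `normalStep`; vectors
orthogonal to the base plane stay nearly orthogonal to the approximating planes. -/
def transport : ℕ → H → H → H
  | 0 => fun _ w => w
  | k + 1 => fun z w => D.normalStep k (D.foot k z) (transport k z w)

theorem differentiable_foot (k : ℕ) : Differentiable ℝ (D.foot k) := by
  induction k with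
  | zero => exact D.base.starProjection.differentiable
  | succ k ih => exact (D.differentiable_push k).comp ih

theorem tangent_zero (z h : H) : D.tangent 0 z h = D.base.starProjection h := by
  change fderiv ℝ D.base.starProjection z h = _
  rw [ContinuousLinearMap.fderiv]

theorem tangent_succ (k : ℕ) (z h : H) :
    D.tangent (k + 1) z h = fderiv ℝ (D.push k) (D.foot k z) (D.tangent k z h) := by
  change fderiv ℝ (D.push k ∘ D.foot k) z h = _
  rw [fderiv_comp z (D.differentiable_push k _) (D.differentiable_foot k z)]
  rfl

theorem transport_succ (k : ℕ) (z w : H) :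
    D.transport (k + 1) z w = D.normalStep k (D.foot k z) (D.transport k z w) := rfl

theorem isNearPlanes_foot (k : ℕ) (z : H) : D.IsNearPlanes k (D.foot k z) := by
  induction k with
  | zero => exact isNearPlanes_starProjection_base z
  | succ k ih => exact ih.push

variable {D} {k : ℕ} {e z w : H}

theorem norm_foot_sub_le_of_isAnchor_succ (h : D.IsAnchor (k + 1) (D.foot (k + 1) z) e) :
    ‖D.foot k z - e‖ ≤ 10 * D.r k :=
  (D.isNearPlanes_foot k z).norm_sub_le_of_isAnchor_push h

theorem isAnchor_foot_of_le {j : ℕ} (h : D.IsAnchor j (D.foot j z) e) {i : ℕ} (hij : i ≤ j) :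
    D.IsAnchor i (D.foot i z) e := by
  induction j, hij using Nat.le_induction with
  | base => exact h
  | succ j _ ih => exact ih (isAnchor_of_norm_sub_le h.1 (norm_foot_sub_le_of_isAnchor_succ h))

theorem norm_starProjection_orthogonal_tangent_le (h : H) (ha : D.IsAnchor k (D.foot k z) e) :
    ‖(D.L k e)ᗮ.starProjection (D.tangent k z h)‖ ≤ 5000 * K * D.β e k * ‖D.tangent k z h‖ := by
  have he := ha.1
  have hK := D.K_pos
  induction k with
  | zero =>
    have hgap := norm_starProjection_orthogonal_sub_le (D.gap_zero_le e he) (D.tangent 0 z h)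
    rw [tangent_zero] at hgap ⊢
    rw [starProjection_orthogonal_starProjection, sub_zero] at hgap
    refine hgap.trans (mul_le_mul_of_nonneg_right ?_ (norm_nonneg _))
    nlinarith [D.β_le_K_mul he 0, mul_nonneg hK.le (D.β_nonneg e he 0)]
  | succ k ih =>
    have hβ := D.β_nonneg e he k
    have hdist := norm_foot_sub_le_of_isAnchor_succ ha
    have ha' := isAnchor_of_norm_sub_le he hdist
    have hreset := norm_starProjection_orthogonal_fderiv_push_le (v := D.tangent k z h) he hdist
      (D.isNearPlanes_foot k z)
    have hstep := ha'.norm_fderiv_push_sub_le (D.isNearPlanes_foot k z) (ih ha')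
    rw [← tangent_succ] at hreset hstep
    have hcomp := (norm_le_of_norm_sub_le_mul (by linarith [D.K_mul_β_le he k]) hstep).2
    have hgap := norm_starProjection_orthogonal_sub_le (D.gap_succ_le e he k)
      (D.tangent (k + 1) z h)
    have htri := norm_le_norm_add_norm_sub'
      ((D.L (k + 1) e)ᗮ.starProjection (D.tangent (k + 1) z h))
      ((D.L k e)ᗮ.starProjection (D.tangent (k + 1) z h))
    have hv := norm_nonneg (D.tangent (k + 1) z h)
    have hKβ := mul_le_mul_of_nonneg_right (D.β_le_K_mul he k) hv
    have hKcomp := mul_le_mul_of_nonneg_left hcomp (mul_nonneg hK.le hβ)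
    have hnext := mul_le_mul_of_nonneg_right
      (mul_le_mul_of_nonneg_left (D.β_le_two_mul e he k) hK.le) hv
    linarith [mul_nonneg (mul_nonneg hK.le hβ) hv]

theorem norm_starProjection_transport_le (hw : D.base.starProjection w = 0)
    (ha : D.IsAnchor k (D.foot k z) e) :
    ‖(D.L k e).starProjection (D.transport k z w)‖ ≤ 6 * D.β e k * ‖D.transport k z w‖ := by
  have he := ha.1
  induction k with
  | zero =>
    have hgap := norm_starProjection_sub_le (D.gap_zero_le e he) w
    rw [hw, sub_zero] at hgap
    change ‖(D.L 0 e).starProjection w‖ ≤ 6 * D.β e 0 * ‖w‖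
    linarith [mul_nonneg (D.β_nonneg e he 0) (norm_nonneg w)]
  | succ k ih =>
    have hβ := D.β_nonneg e he k
    have hdist := norm_foot_sub_le_of_isAnchor_succ ha
    have ha' := isAnchor_of_norm_sub_le he hdist
    have hreset := norm_starProjection_normalStep_le he hdist (D.transport k z w)
    have hstep := ha'.norm_normalStep_sub_le (ih ha')
    rw [← transport_succ] at hreset hstep
    have hcomp := (norm_le_of_norm_sub_le_mul (by linarith [D.β_le e he k, D.δ_le]) hstep).2
    have hgap := norm_starProjection_sub_le (D.gap_succ_le e he k) (D.transport (k + 1) z w)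
    have htri := norm_le_norm_add_norm_sub'
      ((D.L (k + 1) e).starProjection (D.transport (k + 1) z w))
      ((D.L k e).starProjection (D.transport (k + 1) z w))
    have hs := norm_nonneg (D.transport (k + 1) z w)
    have hβcomp := mul_le_mul_of_nonneg_left hcomp hβ
    have hnext := mul_le_mul_of_nonneg_right (D.β_le_two_mul e he k) hs
    linarith [mul_nonneg hβ hs]

theorem norm_tangent_succ_sub_le (k : ℕ) (z h : H) :
    ‖D.tangent (k + 1) z h - D.tangent k z h‖ ≤ 6200 * (K * δ) * ‖D.tangent k z h‖ := by
  have hδ := D.δ_nonneg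
  have hK := D.K_pos
  rw [tangent_succ]
  by_cases hz : ∃ e, D.IsAnchor k (D.foot k z) e
  · obtain ⟨e, ha⟩ := hz
    refine (ha.norm_fderiv_push_sub_le (D.isNearPlanes_foot k z)
      (norm_starProjection_orthogonal_tangent_le h ha)).trans ?_
    have := D.β_le e ha.1 k
    gcongr
  · rw [fderiv_push_apply_of_forall_not_isAnchor (not_exists.1 hz), sub_self, norm_zero]
    positivity

theorem norm_transport_succ_sub_le (k : ℕ) (z : H) (hw : D.base.starProjection w = 0) :
    ‖D.transport (k + 1) z w - D.transport k z w‖ ≤ 7 * δ * ‖D.transport k z w‖ := by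
  have hδ := D.δ_nonneg
  rw [transport_succ]
  by_cases hz : ∃ e, D.IsAnchor k (D.foot k z) e
  · obtain ⟨e, ha⟩ := hz
    refine (ha.norm_normalStep_sub_le (norm_starProjection_transport_le hw ha)).trans ?_
    have := D.β_le e ha.1 k
    gcongr
  · rw [normalStep_of_forall_not_isAnchor (not_exists.1 hz), sub_self, norm_zero]
    positivity

theorem norm_tangent_succ_comparable (k : ℕ) (z h : H) :
    ‖D.tangent (k + 1) z h‖ ≤ 11 / 10 * ‖D.tangent k z h‖ ∧
      ‖D.tangent k z h‖ ≤ 10 / 9 * ‖D.tangent (k + 1) z h‖ :=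
  norm_le_of_norm_sub_le_mul (by linarith [D.δ_mul_K_le]) (norm_tangent_succ_sub_le k z h)

theorem norm_transport_succ_comparable (k : ℕ) (z : H) (hw : D.base.starProjection w = 0) :
    ‖D.transport (k + 1) z w‖ ≤ 11 / 10 * ‖D.transport k z w‖ ∧
      ‖D.transport k z w‖ ≤ 10 / 9 * ‖D.transport (k + 1) z w‖ :=
  norm_le_of_norm_sub_le_mul (by linarith [D.δ_le]) (norm_transport_succ_sub_le k z hw)

theorem tangent_transport_eq_initial_or_eq_after_anchor (k : ℕ) (z : H) :
    ((∀ h, D.tangent k z h = D.tangent 0 z h) ∧ ∀ w, D.transport k z w = w) ∨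
      ∃ j e, D.IsAnchor j (D.foot j z) e ∧ (∀ h, D.tangent k z h = D.tangent (j + 1) z h) ∧
        ∀ w, D.transport k z w = D.transport (j + 1) z w := by
  induction k with
  | zero => exact .inl ⟨fun _ => rfl, fun _ => rfl⟩
  | succ k ih =>
    by_cases hz : ∃ e, D.IsAnchor k (D.foot k z) e
    · obtain ⟨e, ha⟩ := hz
      exact .inr ⟨k, e, ha, fun _ => rfl, fun _ => rfl⟩
    · have hz := not_exists.1 hz
      have htangent h : D.tangent (k + 1) z h = D.tangent k z h :=
        (D.tangent_succ k z h).trans (fderiv_push_apply_of_forall_not_isAnchor hz _)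
      have htransport w : D.transport (k + 1) z w = D.transport k z w :=
        normalStep_of_forall_not_isAnchor hz _
      simpa only [htangent, htransport] using ih

end Foot

section Distortion

/-- The factor by which tangent and transported vectors may grow or shrink over all scales. -/
def distortion (K M : ℝ) : ℝ := Real.exp (2 * 10 ^ 8 * K ^ 2 * |M|)

theorem one_le_distortion (K M : ℝ) : 1 ≤ distortion K M := Real.one_le_exp (by positivity)

variable {D} {e z w : H}

theorem norm_comparable_of_isAnchor {f : ℕ → H} {j : ℕ} (ha : D.IsAnchor j (D.foot j z) e)
    (hf : ∀ i, D.IsAnchor i (D.foot i z) e →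
      |‖f (i + 1)‖ ^ 2 - ‖f i‖ ^ 2| ≤ 2 * 10 ^ 8 * (K * D.β e i) ^ 2 * ‖f i‖ ^ 2) :
    ‖f (j + 1)‖ ≤ distortion K M * ‖f 0‖ ∧ ‖f 0‖ ≤ distortion K M * ‖f (j + 1)‖ := by
  have he := ha.1
  have hsmall : ∀ i, 2 * 10 ^ 8 * (K * D.β e i) ^ 2 ≤ 1 / 2 := fun i => by
    have := pow_le_pow_left₀ (mul_nonneg D.K_pos.le (D.β_nonneg e he i)) (D.K_mul_β_le he i) 2
    linarith
  obtain ⟨hup, hlow⟩ := le_exp_sum_mul_of_abs_sub_le (y := fun i => ‖f i‖ ^ 2) (N := j + 1)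
    (fun i => by positivity) (fun i _ => by positivity) (fun i _ => hsmall i)
    (fun i hi => hf i (isAnchor_foot_of_le ha (Nat.lt_succ_iff.1 hi)))
  have hsum : Real.exp (2 * ∑ i ∈ Finset.range (j + 1), 2 * 10 ^ 8 * (K * D.β e i) ^ 2)
      ≤ distortion K M ^ 2 := by
    rw [distortion, ← Real.exp_nat_mul, Real.exp_le_exp, Nat.cast_ofNat]
    refine mul_le_mul_of_nonneg_left ?_ zero_le_two
    simp only [mul_pow, ← Finset.mul_sum, ← mul_assoc]
    exact mul_le_mul_of_nonneg_left ((D.sum_β_sq_le e he (j + 1)).trans (le_abs_self M))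
      (by positivity)
  have hpos := zero_le_one.trans (one_le_distortion K M)
  constructor <;> refine le_of_sq_le_sq ?_ (by positivity) <;> rw [mul_pow]
  · exact hup.trans (mul_le_mul_of_nonneg_right hsum (by positivity))
  · exact hlow.trans (mul_le_mul_of_nonneg_right hsum (by positivity))

theorem norm_tangent_comparable (k : ℕ) (z h : H) :
    ‖D.tangent k z h‖ ≤ distortion K M * ‖D.base.starProjection h‖ ∧
      ‖D.base.starProjection h‖ ≤ distortion K M * ‖D.tangent k z h‖ := by
  rw [← D.tangent_zero z h]
  rcases tangent_transport_eq_initial_or_eq_after_anchor (D := D) k z with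
    ⟨heq, -⟩ | ⟨j, e, ha, heq, -⟩
  · have := le_mul_of_one_le_left (norm_nonneg (D.tangent 0 z h)) (one_le_distortion K M)
    rw [heq]
    exact ⟨this, this⟩
  · rw [heq]
    refine norm_comparable_of_isAnchor (f := fun i => D.tangent i z h) ha fun i hi => ?_
    simp only [tangent_succ]
    exact hi.abs_norm_fderiv_push_sq_sub_le (D.isNearPlanes_foot i z)
      (norm_starProjection_orthogonal_tangent_le h hi)

theorem norm_transport_comparable (k : ℕ) (z : H) (hw : D.base.starProjection w = 0) :
    ‖D.transport k z w‖ ≤ distortion K M * ‖w‖ ∧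
      ‖w‖ ≤ distortion K M * ‖D.transport k z w‖ := by
  rcases tangent_transport_eq_initial_or_eq_after_anchor (D := D) k z with
    ⟨-, heq⟩ | ⟨j, e, ha, -, heq⟩
  · have := le_mul_of_one_le_left (norm_nonneg w) (one_le_distortion K M)
    rw [heq]
    exact ⟨this, this⟩
  · rw [heq]
    exact norm_comparable_of_isAnchor (f := fun i => D.transport i z w) ha fun i hi =>
      hi.abs_norm_normalStep_sq_sub_le (norm_starProjection_transport_le hw hi)

end Distortion

section Orthogonality

variable {D} {k : ℕ} {e z w : H}

theorem abs_inner_tangent_transport_le_of_isAnchor (h : H) (hw : D.base.starProjection w = 0)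
    (ha : D.IsAnchor k (D.foot k z) e) : |inner ℝ (D.tangent k z h) (D.transport k z w)|
      ≤ 1 / 100 * (‖D.tangent k z h‖ * ‖D.transport k z w‖) := by
  have htangent := norm_starProjection_orthogonal_tangent_le h ha
  have htransport := norm_starProjection_transport_le hw ha
  have hKβ := D.K_mul_β_le ha.1 k
  have hβ := (D.β_le e ha.1 k).trans D.δ_le
  generalize D.tangent k z h = v at *
  generalize D.transport k z w = s at *
  have hsplit : inner ℝ v s = inner ℝ ((D.L k e)ᗮ.starProjection v) s
      + inner ℝ v ((D.L k e).starProjection s) := by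
    rw [Submodule.starProjection_orthogonal_val, inner_sub_left,
      Submodule.inner_starProjection_left_eq_right, sub_add_cancel]
  have hnormal := (abs_real_inner_le_norm ((D.L k e)ᗮ.starProjection v) s).trans
    (mul_le_mul_of_nonneg_right htangent (norm_nonneg _))
  have hplane := (abs_real_inner_le_norm v ((D.L k e).starProjection s)).trans
    (mul_le_mul_of_nonneg_left htransport (norm_nonneg _))
  have hvs : 0 ≤ ‖v‖ * ‖s‖ := by positivity
  rw [hsplit]
  refine (abs_add_le _ _).trans ?_
  nlinarith [mul_le_mul_of_nonneg_right hKβ hvs, mul_le_mul_of_nonneg_right hβ hvs]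

theorem abs_inner_tangent_transport_le (k : ℕ) (z h : H) (hw : D.base.starProjection w = 0) :
    |inner ℝ (D.tangent k z h) (D.transport k z w)|
      ≤ 1 / 10 * (‖D.tangent k z h‖ * ‖D.transport k z w‖) := by
  rcases tangent_transport_eq_initial_or_eq_after_anchor (D := D) k z with
    ⟨htangent, htransport⟩ | ⟨j, e, ha, htangent, htransport⟩
  · rw [htangent, htransport, tangent_zero, Submodule.inner_starProjection_left_eq_right, hw,
      inner_zero_right, abs_zero]
    positivity
  · have hK := D.K_pos
    have hδ := D.δ_nonneg
    rw [htangent, htransport]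
    refine abs_inner_le_of_norm_sub_le (ε := 6200 * (K * δ)) (by positivity)
      (by linarith [D.δ_mul_K_le]) (abs_inner_tangent_transport_le_of_isAnchor h hw ha)
      (norm_tangent_succ_sub_le j z h) ((norm_transport_succ_sub_le j z hw).trans ?_)
    exact mul_le_mul_of_nonneg_right (by nlinarith [D.one_le_K]) (norm_nonneg _)

end Orthogonality

section Offset

/-- The component of `z` orthogonal to the base plane, transported to scale `k`. -/
def offset (k : ℕ) (z : H) : H := D.transport k z (D.baseᗮ.starProjection z)

/-- The part of the derivative of `offset k` that comes from the variation of the transport with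
its base point. -/
def offsetError (k : ℕ) (z h : H) : H :=
  fderiv ℝ (D.offset k) z h - D.transport k z (D.baseᗮ.starProjection h)

theorem hasFDerivAt_offset_succ {k : ℕ} (hk : Differentiable ℝ (D.offset k)) (z : H) :
    HasFDerivAt (D.offset (k + 1)) (fderiv ℝ (D.offset k) z - ∑ c ∈ D.net k,
      (D.θ k c (D.foot k z) • (D.L k c).starProjection ∘L fderiv ℝ (D.offset k) z
        + (fderiv ℝ (D.θ k c) (D.foot k z) ∘L fderiv ℝ (D.foot k) z).smulRight
          ((D.L k c).starProjection (D.offset k z)))) z :=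
  (hk z).hasFDerivAt.sub <| HasFDerivAt.fun_sum fun c _ =>
    (((D.partition k).differentiable c _).hasFDerivAt.comp z
      (D.differentiable_foot k z).hasFDerivAt).smul
        ((D.L k c).starProjection.hasFDerivAt.comp z (hk z).hasFDerivAt)

theorem differentiable_offset (k : ℕ) : Differentiable ℝ (D.offset k) := by
  induction k with
  | zero => exact D.baseᗮ.starProjection.differentiable
  | succ k ih => exact fun z => (D.hasFDerivAt_offset_succ ih z).differentiableAt

theorem offsetError_zero (z h : H) : D.offsetError 0 z h = 0 := by
  change fderiv ℝ D.baseᗮ.starProjection z h - D.baseᗮ.starProjection h = 0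
  rw [ContinuousLinearMap.fderiv, sub_self]

theorem offsetError_succ (k : ℕ) (z h : H) : D.offsetError (k + 1) z h
    = D.normalStep k (D.foot k z) (D.offsetError k z h)
      - ∑ c ∈ D.net k, fderiv ℝ (D.θ k c) (D.foot k z) (D.tangent k z h)
        • (D.L k c).starProjection (D.offset k z) := by
  simp only [offsetError, (D.hasFDerivAt_offset_succ (D.differentiable_offset k) z).fderiv,
    transport_succ, normalStep, tangent, map_sub, smul_sub, Finset.sum_sub_distrib,
    sub_apply, sum_apply, add_apply,
    smul_apply, ContinuousLinearMap.comp_apply,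
    ContinuousLinearMap.smulRight_apply, Finset.sum_add_distrib]
  abel

variable {D}

theorem norm_offset_succ_comparable (k : ℕ) (z : H) :
    ‖D.offset (k + 1) z‖ ≤ 11 / 10 * ‖D.offset k z‖ ∧
      ‖D.offset k z‖ ≤ 10 / 9 * ‖D.offset (k + 1) z‖ :=
  norm_transport_succ_comparable k z (starProjection_starProjection_orthogonal _ _)

theorem norm_starProjection_offset_le {k : ℕ} {z c : H} (hc : c ∈ D.net k)
    (hθ : D.θ k c (D.foot k z) ≠ 0) :
    ‖(D.L k c).starProjection (D.offset k z)‖ ≤ 6 * δ * ‖D.offset k z‖ := by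
  have ha := isAnchor_of_weight_ne_zero hc hθ
  refine (norm_starProjection_transport_le
    (starProjection_starProjection_orthogonal _ _) ha).trans ?_
  exact mul_le_mul_of_nonneg_right (by linarith [D.β_le c ha.1 k]) (norm_nonneg _)

theorem norm_offsetError_succ_mul_le (k : ℕ) (z h : H) :
    ‖D.offsetError (k + 1) z h‖ * D.r k ≤ ‖D.offsetError k z h‖ * D.r k
      + 6 * (K * δ) * (‖D.tangent k z h‖ * ‖D.offset k z‖) := by
  have hδ := D.δ_nonneg
  have hr := D.r_pos k
  have hstep := norm_normalStep_le (D := D) k (D.foot k z) (D.offsetError k z h)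
  have hvar := (norm_sum_smul_le_sum_abs_mul fun c hc hne => norm_starProjection_offset_le hc
    ((D.partition k).ne_zero_of_fderiv_ne_zero hne)).trans (mul_le_mul_of_nonneg_right
      ((D.partition k).sum_abs_fderiv_apply_le (D.foot k z) (D.tangent k z h)) (by positivity))
  have hscale : K / D.r k * ‖D.tangent k z h‖ * (6 * δ * ‖D.offset k z‖) * D.r k
      = 6 * (K * δ) * (‖D.tangent k z h‖ * ‖D.offset k z‖) := by field_simp
  rw [offsetError_succ, ← hscale, ← add_mul]
  exact mul_le_mul_of_nonneg_right ((norm_sub_le _ _).trans (add_le_add hstep hvar)) hr.le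

theorem norm_offsetError_mul_le (k : ℕ) (z h : H) :
    ‖D.offsetError k z h‖ * D.r k ≤ 5 * (K * δ) * (‖D.tangent k z h‖ * ‖D.offset k z‖) := by
  have hKδ := mul_nonneg D.K_pos.le D.δ_nonneg
  induction k with
  | zero => rw [offsetError_zero, norm_zero, zero_mul]; positivity
  | succ k ih =>
    have hstep := norm_offsetError_succ_mul_le (D := D) k z h
    have hprod : ‖D.tangent k z h‖ * ‖D.offset k z‖
        ≤ (10 / 9 * ‖D.tangent (k + 1) z h‖) * (10 / 9 * ‖D.offset (k + 1) z‖) :=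
      mul_le_mul (norm_tangent_succ_comparable k z h).2 (norm_offset_succ_comparable k z).2
        (norm_nonneg _) (by positivity)
    have hKδprod := mul_le_mul_of_nonneg_left hprod hKδ
    have hnonneg : 0 ≤ K * δ * (‖D.tangent (k + 1) z h‖ * ‖D.offset (k + 1) z‖) := by positivity
    rw [r_succ]
    linarith

end Offset

section Chart

/-- The parametrization of a neighbourhood of `E` at scale `k`: the base plane follows `foot`, and
the directions orthogonal to it are transported along. -/
def chart (k : ℕ) (z : H) : H := D.foot k z + D.offset k z

theorem chart_zero : D.chart 0 = id := by
  funext z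
  exact D.base.starProjection_add_starProjection_orthogonal z

theorem differentiable_chart (k : ℕ) : Differentiable ℝ (D.chart k) :=
  (D.differentiable_foot k).add (D.differentiable_offset k)

theorem fderiv_offset (k : ℕ) (z h : H) : fderiv ℝ (D.offset k) z h
    = D.transport k z (D.baseᗮ.starProjection h) + D.offsetError k z h := by
  rw [offsetError, add_sub_cancel]

theorem fderiv_chart (k : ℕ) (z h : H) : fderiv ℝ (D.chart k) z h
    = D.tangent k z h + D.transport k z (D.baseᗮ.starProjection h) + D.offsetError k z h := by
  have hderiv : HasFDerivAt (D.chart k) _ z :=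
    (D.differentiable_foot k z).hasFDerivAt.add (D.differentiable_offset k z).hasFDerivAt
  rw [hderiv.fderiv, add_apply, fderiv_offset, tangent, add_assoc]

/-- The size of the two main components of the derivative of `chart k` at `z` in the direction
`h`. -/
def speed (k : ℕ) (z h : H) : ℝ :=
  ‖D.tangent k z h‖ + ‖D.transport k z (D.baseᗮ.starProjection h)‖

theorem speed_nonneg (k : ℕ) (z h : H) : 0 ≤ D.speed k z h := by
  unfold speed
  positivity

variable {D}

theorem speed_comparable (k : ℕ) (z h : H) : D.speed k z h ≤ 2 * distortion K M * ‖h‖ ∧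
    ‖h‖ ≤ distortion K M * D.speed k z h := by
  obtain ⟨htan, htan'⟩ := D.norm_tangent_comparable k z h
  obtain ⟨htrans, htrans'⟩ := D.norm_transport_comparable k z
    (starProjection_starProjection_orthogonal D.base h)
  have hbase := D.base.norm_starProjection_apply_le h
  have horth := D.baseᗮ.norm_starProjection_apply_le h
  have hsplit : ‖h‖ ≤ ‖D.base.starProjection h‖ + ‖D.baseᗮ.starProjection h‖ := by
    conv_lhs => rw [← D.base.starProjection_add_starProjection_orthogonal h]
    exact norm_add_le _ _
  have hΛ := one_le_distortion K M
  unfold speed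
  constructor <;> nlinarith

variable {k : ℕ} {z : H}

theorem norm_offsetError_le {m : ℝ} (hm : ‖D.offset k z‖ ≤ m * D.r k) (h : H) :
    ‖D.offsetError k z h‖ ≤ 5 * (K * δ) * m * ‖D.tangent k z h‖ := by
  have hKδ := mul_nonneg D.K_pos.le D.δ_nonneg
  refine le_of_mul_le_mul_right ((norm_offsetError_mul_le k z h).trans ?_) (D.r_pos k)
  calc 5 * (K * δ) * (‖D.tangent k z h‖ * ‖D.offset k z‖)
      ≤ 5 * (K * δ) * (‖D.tangent k z h‖ * (m * D.r k)) := by gcongr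
    _ = 5 * (K * δ) * m * ‖D.tangent k z h‖ * D.r k := by ring

theorem norm_offsetError_le_tangent (hz : ‖D.offset k z‖ ≤ D.r k) (h : H) :
    ‖D.offsetError k z h‖ ≤ 1 / 100 * ‖D.tangent k z h‖ :=
  (norm_offsetError_le (m := 1) (by rwa [one_mul]) h).trans
    (mul_le_mul_of_nonneg_right (by linarith [D.K_mul_δ_le]) (norm_nonneg _))

theorem norm_fderiv_chart_comparable (hz : ‖D.offset k z‖ ≤ D.r k) (h : H) :
    ‖fderiv ℝ (D.chart k) z h‖ ≤ 2 * D.speed k z h ∧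
      D.speed k z h ≤ 2 * ‖fderiv ℝ (D.chart k) z h‖ := by
  have herr := norm_offsetError_le_tangent hz h
  have hangle := D.abs_inner_tangent_transport_le k z h
    (starProjection_starProjection_orthogonal D.base h)
  rw [fderiv_chart, speed]
  generalize D.tangent k z h = x at *
  generalize D.transport k z (D.baseᗮ.starProjection h) = y at *
  generalize D.offsetError k z h = w at *
  have hx := norm_nonneg x
  have hy := norm_nonneg y
  have hadd : 6 / 10 * (‖x‖ + ‖y‖) ≤ ‖x + y‖ := by
    refine le_of_sq_le_sq ?_ (norm_nonneg _)
    rw [norm_add_sq_real]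
    nlinarith [neg_le_of_abs_le hangle, sq_nonneg (‖x‖ - ‖y‖)]
  constructor
  · linarith [norm_add_le (x + y) w, norm_add_le x y]
  · linarith [norm_sub_le_norm_add (x + y) w]

theorem norm_foot_succ_sub_le (k : ℕ) (z : H) :
    ‖D.foot (k + 1) z - D.foot k z‖ ≤ 1100 * δ * D.r k :=
  (D.isNearPlanes_foot k z).norm_push_sub_le

theorem norm_chart_succ_sub_le (hz : ‖D.offset k z‖ ≤ D.r k) :
    ‖D.chart (k + 1) z - D.chart k z‖ ≤ 1107 * δ * D.r k := by
  have hfoot := D.norm_foot_succ_sub_le k z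
  have hoffset : ‖D.offset (k + 1) z - D.offset k z‖ ≤ 7 * δ * ‖D.offset k z‖ :=
    D.norm_transport_succ_sub_le k z (starProjection_starProjection_orthogonal _ _)
  have hscale := mul_le_mul_of_nonneg_left hz D.δ_nonneg
  rw [chart, chart, add_sub_add_comm]
  linarith [norm_add_le (D.foot (k + 1) z - D.foot k z) (D.offset (k + 1) z - D.offset k z)]

theorem norm_fderiv_chart_succ_sub_le (hz : ‖D.offset k z‖ ≤ D.r k) (h : H) :
    ‖fderiv ℝ (D.chart (k + 1)) z h - fderiv ℝ (D.chart k) z h‖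
      ≤ 6300 * (K * δ) * D.speed k z h := by
  have hKδ := mul_nonneg D.K_pos.le D.δ_nonneg
  have herr := norm_offsetError_le (m := 1) (by rwa [one_mul]) h
  have herr_succ := norm_offsetError_le (k := k + 1) (z := z) (m := 11)
    (by rw [D.r_succ]; linarith [(D.norm_offset_succ_comparable k z).1]) h
  have htan_succ := mul_le_mul_of_nonneg_left (D.norm_tangent_succ_comparable k z h).1 hKδ
  have htan := D.norm_tangent_succ_sub_le k z h
  have htrans := D.norm_transport_succ_sub_le k z
    (starProjection_starProjection_orthogonal D.base h)
  have hδ := mul_le_mul_of_nonneg_right D.δ_le_K_mul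
    (norm_nonneg (D.transport k z (D.baseᗮ.starProjection h)))
  have hKδtan := mul_nonneg hKδ (norm_nonneg (D.tangent k z h))
  have hKδtrans := mul_nonneg hKδ
    (norm_nonneg (D.transport k z (D.baseᗮ.starProjection h)))
  rw [fderiv_chart, fderiv_chart, add_sub_add_comm, add_sub_add_comm, speed]
  linarith [norm_add₃_le (a := D.tangent (k + 1) z h - D.tangent k z h)
      (b := D.transport (k + 1) z (D.baseᗮ.starProjection h)
        - D.transport k z (D.baseᗮ.starProjection h))
      (c := D.offsetError (k + 1) z h - D.offsetError k z h),
    norm_sub_le (D.offsetError (k + 1) z h) (D.offsetError k z h)]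

end Chart

section Cut

/-- The cutoff function selecting the points whose offset at scale `k` is less than `D.r k`. -/
def cut (k : ℕ) (z : H) : ℝ := D.χ ((D.r k ^ 2)⁻¹ * ‖D.offset k z‖ ^ 2)

theorem cut_nonneg (k : ℕ) (z : H) : 0 ≤ D.cut k z := D.cutoff.nonneg _

theorem cut_le_one (k : ℕ) (z : H) : D.cut k z ≤ 1 := D.cutoff.le_one _

theorem hasFDerivAt_cut (k : ℕ) (z : H) : HasFDerivAt (D.cut k)
    (fderiv ℝ (fun y => D.χ ((D.r k ^ 2)⁻¹ * ‖y‖ ^ 2)) (D.offset k z) ∘L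
      fderiv ℝ (D.offset k) z) z := by
  have hχ := (D.cutoff.hasFDerivAt_comp_norm_sq 0 (D.offset k z) (D.r k)).differentiableAt
  simp only [sub_zero] at hχ
  exact hχ.hasFDerivAt.comp z (D.differentiable_offset k z).hasFDerivAt

theorem differentiable_cut (k : ℕ) : Differentiable ℝ (D.cut k) := fun z =>
  (D.hasFDerivAt_cut k z).differentiableAt

variable {D} {k : ℕ} {z : H}

theorem norm_offset_lt_of_cut_ne_zero (h : D.cut k z ≠ 0) : ‖D.offset k z‖ < D.r k := by
  contrapose! h
  simpa [cut] using D.cutoff.comp_norm_sq_eq_zero (D.r_pos k) (c := (0 : H)) (by simpa using h)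

theorem cut_eq_one (h : ‖D.offset k z‖ ≤ 3 / 4 * D.r k) : D.cut k z = 1 := by
  have hr := D.r_pos k
  refine D.cutoff.eq_one _ ((inv_mul_le_iff₀ (by positivity)).2 ?_)
  linarith [pow_le_pow_left₀ (norm_nonneg _) h 2]

theorem cut_eq_one_of_cut_succ_ne_zero (h : D.cut (k + 1) z ≠ 0) : D.cut k z = 1 := by
  have hz := norm_offset_lt_of_cut_ne_zero h
  rw [D.r_succ] at hz
  exact cut_eq_one (by linarith [(D.norm_offset_succ_comparable k z).2, D.r_pos k])

theorem fderiv_cut_of_eq_zero (h : D.cut k z = 0) : fderiv ℝ (D.cut k) z = 0 :=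
  IsLocalMin.fderiv_eq_zero (.of_forall fun y => h.trans_le (D.cut_nonneg k y))

theorem fderiv_cut_of_eq_one (h : D.cut k z = 1) : fderiv ℝ (D.cut k) z = 0 :=
  IsLocalMax.fderiv_eq_zero (.of_forall fun y => (D.cut_le_one k y).trans_eq h.symm)

theorem abs_fderiv_cut_le (hz : ‖D.offset k z‖ ≤ D.r k) (h : H) :
    |fderiv ℝ (D.cut k) z h| ≤ 2 * K / D.r k * D.speed k z h := by
  have hK := D.K_pos
  have hr := D.r_pos k
  have hχ := D.cutoff.norm_fderiv_comp_norm_sq_le (D.r_pos k) 0 (D.offset k z)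
  simp only [sub_zero] at hχ
  have hoffset : ‖fderiv ℝ (D.offset k) z h‖ ≤ D.speed k z h := by
    rw [fderiv_offset, speed]
    linarith [norm_add_le (D.transport k z (D.baseᗮ.starProjection h)) (D.offsetError k z h),
      norm_offsetError_le_tangent hz h, norm_nonneg (D.tangent k z h)]
  rw [(D.hasFDerivAt_cut k z).fderiv, ← Real.norm_eq_abs, ContinuousLinearMap.comp_apply]
  exact (ContinuousLinearMap.le_opNorm _ _).trans
    (mul_le_mul hχ hoffset (norm_nonneg _) (by positivity))

end Cut

section Approx

/-- The smooth approximations of the parametrization: `chart (k + 1)` replaces `chart k` where the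
cutoff at scale `k` equals `1`. -/
def approx : ℕ → H → H
  | 0 => id
  | k + 1 => fun z => approx k z + D.cut k z • (D.chart (k + 1) z - D.chart k z)

theorem approx_succ (k : ℕ) (z : H) :
    D.approx (k + 1) z = D.approx k z + D.cut k z • (D.chart (k + 1) z - D.chart k z) := rfl

theorem differentiable_approx (k : ℕ) : Differentiable ℝ (D.approx k) := by
  induction k with
  | zero => exact differentiable_id
  | succ k ih =>
    exact ih.add ((D.differentiable_cut k).smul
      ((D.differentiable_chart (k + 1)).sub (D.differentiable_chart k)))

theorem fderiv_approx_succ (k : ℕ) (z h : H) :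
    fderiv ℝ (D.approx (k + 1)) z h = fderiv ℝ (D.approx k) z h
      + (D.cut k z • (fderiv ℝ (D.chart (k + 1)) z h - fderiv ℝ (D.chart k) z h)
        + fderiv ℝ (D.cut k) z h • (D.chart (k + 1) z - D.chart k z)) := by
  have hderiv : HasFDerivAt (D.approx (k + 1)) _ z :=
    (D.differentiable_approx k z).hasFDerivAt.add ((D.differentiable_cut k z).hasFDerivAt.smul
      ((D.differentiable_chart (k + 1) z).hasFDerivAt.sub
        (D.differentiable_chart k z).hasFDerivAt))
  rw [hderiv.fderiv]
  simp

variable {D} {k : ℕ} {z : H}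

theorem approx_eq_chart_and_fderiv_eq_of_cut_ne_zero (hk : D.cut k z ≠ 0) :
    D.approx k z = D.chart k z ∧ ∀ h, fderiv ℝ (D.approx k) z h = fderiv ℝ (D.chart k) z h := by
  induction k with
  | zero => rw [chart_zero]; exact ⟨rfl, fun h => rfl⟩
  | succ k ih =>
    have hcut := cut_eq_one_of_cut_succ_ne_zero hk
    obtain ⟨hvalue, hderiv⟩ := ih (hcut ▸ one_ne_zero)
    refine ⟨by rw [approx_succ, hvalue, hcut, one_smul, add_sub_cancel], fun h => ?_⟩
    rw [fderiv_approx_succ, hderiv, hcut, fderiv_cut_of_eq_one hcut]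
    simp

theorem approx_succ_eq_chart (hk : D.cut k z = 1) : D.approx (k + 1) z = D.chart (k + 1) z := by
  rw [approx_succ, (approx_eq_chart_and_fderiv_eq_of_cut_ne_zero (hk ▸ one_ne_zero)).1, hk,
    one_smul, add_sub_cancel]

theorem fderiv_approx_succ_of_cut_eq_zero (hk : D.cut k z = 0) (h : H) :
    fderiv ℝ (D.approx (k + 1)) z h = fderiv ℝ (D.approx k) z h := by
  rw [fderiv_approx_succ, hk, fderiv_cut_of_eq_zero hk]
  simp

theorem norm_fderiv_approx_succ_sub_le_speed (hk : D.cut k z ≠ 0) (h : H) :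
    ‖fderiv ℝ (D.approx (k + 1)) z h - fderiv ℝ (D.approx k) z h‖
      ≤ 1 / 4 * D.speed k z h := by
  have hz := (norm_offset_lt_of_cut_ne_zero hk).le
  have hr := D.r_pos k
  have hspeed := D.speed_nonneg k z h
  have hderiv : ‖D.cut k z • (fderiv ℝ (D.chart (k + 1)) z h - fderiv ℝ (D.chart k) z h)‖
      ≤ 6300 * (K * δ) * D.speed k z h := by
    rw [norm_smul, Real.norm_of_nonneg (D.cut_nonneg k z)]
    exact (mul_le_of_le_one_left (norm_nonneg _) (D.cut_le_one k z)).trans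
      (norm_fderiv_chart_succ_sub_le hz h)
  have hcut : ‖fderiv ℝ (D.cut k) z h • (D.chart (k + 1) z - D.chart k z)‖
      ≤ 2214 * (K * δ) * D.speed k z h := by
    have hK := D.K_pos
    rw [norm_smul, Real.norm_eq_abs]
    calc _ ≤ 2 * K / D.r k * D.speed k z h * (1107 * δ * D.r k) :=
          mul_le_mul (abs_fderiv_cut_le hz h) (norm_chart_succ_sub_le hz) (norm_nonneg _)
            (by positivity)
      _ = 2214 * (K * δ) * D.speed k z h := by field_simp; ring
  have hKδ := mul_le_mul_of_nonneg_right D.K_mul_δ_le hspeed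
  rw [fderiv_approx_succ, add_sub_cancel_left]
  exact (norm_add_le _ _).trans (by linarith)

theorem norm_fderiv_approx_succ_sub_le (k : ℕ) (z h : H) :
    ‖fderiv ℝ (D.approx (k + 1)) z h - fderiv ℝ (D.approx k) z h‖
      ≤ 1 / 2 * ‖fderiv ℝ (D.approx k) z h‖ := by
  by_cases hk : D.cut k z = 0
  · rw [fderiv_approx_succ_of_cut_eq_zero hk, sub_self, norm_zero]
    positivity
  · have hspeed :=
      (norm_fderiv_chart_comparable (norm_offset_lt_of_cut_ne_zero hk).le h).2
    rw [← (approx_eq_chart_and_fderiv_eq_of_cut_ne_zero hk).2] at hspeed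
    linarith [norm_fderiv_approx_succ_sub_le_speed hk h]

theorem norm_fderiv_approx_comparable (k : ℕ) (z h : H) :
    ‖fderiv ℝ (D.approx k) z h‖ ≤ 6 * distortion K M * ‖h‖ ∧
      ‖h‖ ≤ 6 * distortion K M * ‖fderiv ℝ (D.approx k) z h‖ := by
  have hΛ := one_le_distortion K M
  induction k with
  | zero =>
    have hle := le_mul_of_one_le_left (norm_nonneg h) (by linarith : 1 ≤ 6 * distortion K M)
    simpa only [approx, fderiv_id, ContinuousLinearMap.id_apply] using And.intro hle hle
  | succ k ih =>
    by_cases hk : D.cut k z = 0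
    · rwa [fderiv_approx_succ_of_cut_eq_zero hk]
    · have hstep := norm_fderiv_approx_succ_sub_le_speed hk h
      obtain ⟨hupper, hlower⟩ :=
        norm_fderiv_chart_comparable (norm_offset_lt_of_cut_ne_zero hk).le h
      obtain ⟨hspeed, hspeed'⟩ := D.speed_comparable k z h
      rw [← (approx_eq_chart_and_fderiv_eq_of_cut_ne_zero hk).2] at hupper hlower
      have hnorm := norm_le_norm_add_norm_sub' (fderiv ℝ (D.approx (k + 1)) z h)
        (fderiv ℝ (D.approx k) z h)
      have hnorm' := norm_le_norm_add_norm_sub (fderiv ℝ (D.approx (k + 1)) z h)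
        (fderiv ℝ (D.approx k) z h)
      have hspeed_le : D.speed k z h ≤ 4 * ‖fderiv ℝ (D.approx (k + 1)) z h‖ := by linarith
      have hΛspeed := mul_le_mul_of_nonneg_left hspeed_le (zero_le_one.trans hΛ)
      have hnonneg : 0 ≤ distortion K M * ‖fderiv ℝ (D.approx (k + 1)) z h‖ := by positivity
      constructor <;> linarith

theorem norm_approx_succ_sub_le (k : ℕ) (z : H) :
    ‖D.approx (k + 1) z - D.approx k z‖ ≤ 1107 * δ * D.r k := by
  rw [approx_succ, add_sub_cancel_left, norm_smul, Real.norm_of_nonneg (D.cut_nonneg k z)]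
  by_cases hk : D.cut k z = 0
  · have hr := D.r_pos k
    have hδ := D.δ_nonneg
    rw [hk, zero_mul]
    positivity
  · exact (mul_le_of_le_one_left (norm_nonneg _) (D.cut_le_one k z)).trans
      (norm_chart_succ_sub_le (norm_offset_lt_of_cut_ne_zero hk).le)

variable (D)

theorem exists_bilipschitz_parametrization : ∃ G : H → H, Function.Surjective G ∧
    LipschitzWith (6 * distortion K M).toNNReal G ∧
    AntilipschitzWith (6 * distortion K M).toNNReal G ∧
    ∀ k z, ‖G z - D.approx k z‖ ≤ 1 / 100 * D.r k := by
  have hΛ := one_le_distortion K M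
  have hC : ((6 * distortion K M).toNNReal : ℝ) = 6 * distortion K M :=
    Real.coe_toNNReal _ (by linarith)
  have hchain := bijective_bilipschitz_of_fderiv_chain (g := D.approx) (c := 1 / 2)
    (C := (6 * distortion K M).toNNReal) (by norm_num [← NNReal.coe_lt_coe]) rfl
    D.differentiable_approx
    (fun k z h => hC.symm ▸ (norm_fderiv_approx_comparable (D := D) k z h).1)
    (fun k z h => hC.symm ▸ (norm_fderiv_approx_comparable (D := D) k z h).2)
    (fun k z h => by simpa using norm_fderiv_approx_succ_sub_le k z h)
  obtain ⟨G, hsurj, hlip, hanti, hlim⟩ := exists_bilipschitz_limit (g := D.approx)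
    (c := 1107 * δ * D.r 0) (q := 1 / 10) (by norm_num) (by norm_num)
    (fun k => (hchain k).1.surjective) (fun k => (hchain k).2.1) (fun k => (hchain k).2.2)
    (fun k z => by
      rw [dist_comm, dist_eq_norm, mul_assoc, ← r_eq]
      exact norm_approx_succ_sub_le k z)
  refine ⟨G, hsurj, hlip, hanti, fun k z => ?_⟩
  rw [← dist_eq_norm]
  refine (hlim k z).trans ?_
  rw [mul_assoc, ← r_eq, div_le_iff₀ (by norm_num)]
  nlinarith [D.δ_le, D.r_pos k]

end Approx

section Image

variable {D} {G : H → H} {F : Set H} {k : ℕ} {e z : H}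

theorem exists_le_norm_offset (hz : D.baseᗮ.starProjection z ≠ 0) :
    ∃ k, 3 / 4 * D.r k ≤ ‖D.offset k z‖ := by
  by_contra! hsmall
  have hle : ∀ k, ‖D.baseᗮ.starProjection z‖
      ≤ distortion K M * (3 / 4 * (D.r 0 * (1 / 10) ^ k)) := fun k => by
    rw [← D.r_eq]
    exact (D.norm_transport_comparable k z (starProjection_starProjection_orthogonal _ z)).2.trans
      (mul_le_mul_of_nonneg_left (hsmall k).le (zero_le_one.trans (one_le_distortion K M)))
  have htendsto := ((((tendsto_pow_atTop_nhds_zero_of_lt_one (r := (1 / 10 : ℝ)) (by norm_num)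
    (by norm_num)).const_mul (D.r 0)).const_mul (3 / 4)).const_mul (distortion K M))
  simp only [mul_zero] at htendsto
  exact hz (norm_le_zero_iff.1 (ge_of_tendsto' htendsto hle))

/-- The offset is almost orthogonal to the plane at `e`, while both `e` and `foot k z` are close to
that plane. -/
theorem norm_offset_lt_of_norm_sub_chart_le (he : e ∈ D.E) (hoff : ‖D.offset k z‖ ≤ 10 * D.r k)
    (hez : ‖e - D.chart k z‖ ≤ 1 / 100 * D.r k) : ‖D.offset k z‖ < 3 / 4 * D.r k := by
  have hr := D.r_pos k
  have hsub : e - D.foot k z = (e - D.chart k z) + D.offset k z := by rw [chart]; abel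
  have hanchor : D.IsAnchor k (D.foot k z) e := by
    refine ⟨he, ?_⟩
    rw [norm_sub_rev, hsub]
    linarith [norm_add_le (e - D.chart k z) (D.offset k z)]
  have htangential : ‖(D.L k e).starProjection (D.offset k z)‖
      ≤ 6 * D.β e k * ‖D.offset k z‖ :=
    D.norm_starProjection_transport_le (starProjection_starProjection_orthogonal _ z) hanchor
  have hnormal : ‖(D.L k e)ᗮ.starProjection (D.offset k z)‖
      ≤ 1 / 100 * D.r k + 1000 * D.β e k * D.r k := by
    have hsplit : (D.L k e)ᗮ.starProjection (D.offset k z)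
        = -((D.L k e)ᗮ.starProjection (e - D.chart k z)
          + (D.L k e)ᗮ.starProjection (D.foot k z - e)) := by
      rw [← map_add, ← map_neg, chart]; congr 1; abel
    rw [hsplit, norm_neg]
    exact (norm_add_le _ _).trans (add_le_add
      (((D.L k e)ᗮ.norm_starProjection_apply_le _).trans hez) (D.isNearPlanes_foot k z e hanchor))
  have htri := norm_add_le ((D.L k e).starProjection (D.offset k z))
    ((D.L k e)ᗮ.starProjection (D.offset k z))
  rw [Submodule.starProjection_add_starProjection_orthogonal] at htri
  have hβ := (D.β_le e he k).trans D.δ_le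
  nlinarith [norm_nonneg (D.offset k z)]

theorem mem_base_of_apply_mem (hG : ∀ k z, ‖G z - D.approx k z‖ ≤ 1 / 100 * D.r k)
    (he : G z ∈ D.E) : z ∈ D.base := by
  by_contra hz
  have hz' : D.baseᗮ.starProjection z ≠ 0 := by
    rwa [Ne, Submodule.starProjection_apply_eq_zero_iff, Submodule.orthogonal_orthogonal]
  obtain ⟨m, hm, hmin⟩ := Nat.findX (exists_le_norm_offset hz')
  cases m with
  | zero =>
    change 3 / 4 * D.r 0 ≤ ‖D.baseᗮ.starProjection z‖ at hm
    have hflat := D.flat_zero _ he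
    have hβ := mul_le_mul_of_nonneg_right ((D.β_le _ he 0).trans D.δ_le) (D.r_pos 0).le
    have hclose := (D.baseᗮ.norm_starProjection_apply_le (G z - z)).trans (hG 0 z)
    rw [map_sub] at hclose
    linarith [norm_le_norm_add_norm_sub (D.baseᗮ.starProjection (G z))
      (D.baseᗮ.starProjection z), D.r_pos 0, hm]
  | succ m =>
    have hsmall := not_le.1 (hmin m m.lt_succ_self)
    have hGm := hG (m + 1) z
    rw [approx_succ_eq_chart (cut_eq_one hsmall.le)] at hGm
    have hoff : ‖D.offset (m + 1) z‖ ≤ 10 * D.r (m + 1) := by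
      rw [D.r_succ]
      linarith [(D.norm_offset_succ_comparable m z).1, D.r_pos m]
    exact hm.not_gt (norm_offset_lt_of_norm_sub_chart_le he hoff hGm)

theorem offset_eq_zero_of_mem_base (hz : z ∈ D.base) (k : ℕ) : D.offset k z = 0 := by
  refine norm_le_zero_iff.1 ((D.norm_transport_comparable k z
    (starProjection_starProjection_orthogonal _ z)).1.trans_eq ?_)
  rw [Submodule.starProjection_orthogonal_apply_eq_zero hz, norm_zero, mul_zero]

theorem approx_eq_foot_of_mem_base (hz : z ∈ D.base) (k : ℕ) : D.approx k z = D.foot k z := by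
  cases k with
  | zero => exact (Submodule.starProjection_eq_self_iff.2 hz).symm
  | succ k =>
    have hoff := D.offset_eq_zero_of_mem_base hz
    have hr := D.r_pos k
    rw [approx_succ_eq_chart (cut_eq_one (by rw [hoff, norm_zero]; positivity)), chart, hoff,
      add_zero]

theorem exists_norm_foot_succ_sub_le (he : e ∈ D.E)
    (hfills : Fills F e (D.L k e) (10 * D.r k) (δ * D.r k)) (hez : ‖D.foot k z - e‖ ≤ D.r k) :
    ∃ e' ∈ F, ‖D.foot (k + 1) z - e'‖ ≤ D.r (k + 1) := by
  have hr := D.r_pos k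
  have hδ := mul_le_mul_of_nonneg_right D.δ_le hr.le
  have hβ := mul_le_mul_of_nonneg_right (D.β_le e he k) hr.le
  have hnormal : ‖(D.L k e)ᗮ.starProjection (D.foot (k + 1) z - e)‖ ≤ 41 * D.β e k * D.r k :=
    norm_starProjection_orthogonal_push_sub_le he (by linarith)
  have hdist : ‖D.foot (k + 1) z - e‖ < 10 * D.r k := by
    linarith [norm_sub_le_norm_sub_add_norm_sub (D.foot (k + 1) z) (D.foot k z) e,
      D.norm_foot_succ_sub_le k z]
  obtain ⟨e', he', hclose⟩ := hfills _ (Submodule.starProjection_apply_mem _ _)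
    (((D.L k e).norm_starProjection_apply_le _).trans_lt hdist)
  refine ⟨e', he', ?_⟩
  have hsplit : D.foot (k + 1) z - e' = (D.L k e)ᗮ.starProjection (D.foot (k + 1) z - e)
      - (e' - (e + (D.L k e).starProjection (D.foot (k + 1) z - e))) := by
    rw [Submodule.starProjection_orthogonal_val]; abel
  rw [hsplit, D.r_succ]
  exact (norm_sub_le _ _).trans (by linarith)

/-- The system describes the part of `F` in `B(0,5)`, at scales at most `1`, and its planes lie near
`F`. -/
structure IsFilledBy (D : FlatSystem H K δ M) (F : Set H) : Prop where
  E_eq : D.E = F ∩ closedBall 0 5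
  r_zero_le : D.r 0 ≤ 1
  fills_base : Fills F 0 D.base 3 (δ * D.r 0)
  fills : ∀ e ∈ D.E, ∀ k, Fills F e (D.L k e) (10 * D.r k) (δ * D.r k)

theorem IsFilledBy.r_le (hF : D.IsFilledBy F) (k : ℕ) : D.r k ≤ (1 / 10) ^ k :=
  (D.r_eq k).trans_le (mul_le_of_le_one_left (by positivity) hF.r_zero_le)

theorem IsFilledBy.r_le_one (hF : D.IsFilledBy F) (k : ℕ) : D.r k ≤ 1 :=
  (hF.r_le k).trans (pow_le_one₀ (by norm_num) (by norm_num))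

theorem IsFilledBy.exists_norm_foot_sub_le (hF : D.IsFilledBy F) (hz : z ∈ D.base)
    (hfoot : ∀ k, ‖D.foot k z‖ ≤ 2) (k : ℕ) :
    ∃ e ∈ D.E, ‖D.foot k z - e‖ ≤ D.r k := by
  have hmem : ∀ k, ∀ e ∈ F, ‖D.foot k z - e‖ ≤ D.r k → e ∈ D.E := fun k e he hke => by
    rw [hF.E_eq]
    refine ⟨he, mem_closedBall_zero_iff.2 ?_⟩
    linarith [norm_le_norm_add_norm_sub (D.foot k z) e, hfoot k, hF.r_le_one k]
  induction k with
  | zero =>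
    have hz0 : D.foot 0 z = z := Submodule.starProjection_eq_self_iff.2 hz
    obtain ⟨e, he, hez⟩ := hF.fills_base z hz (by linarith [hz0 ▸ hfoot 0])
    rw [zero_add, norm_sub_rev] at hez
    have hle : ‖D.foot 0 z - e‖ ≤ D.r 0 := by
      rw [hz0]
      nlinarith [D.r_pos 0, D.δ_le]
    exact ⟨e, hmem 0 e he hle, hle⟩
  | succ k ih =>
    obtain ⟨e, he, hez⟩ := ih
    obtain ⟨e', he', hle⟩ := exists_norm_foot_succ_sub_le he (hF.fills e he k) hez
    exact ⟨e', hmem (k + 1) e' he' hle, hle⟩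

theorem IsFilledBy.apply_mem_of_mem_base (hF : D.IsFilledBy F) (hclosed : IsClosed F)
    (hG : ∀ k z, ‖G z - D.approx k z‖ ≤ 1 / 100 * D.r k) (hz : z ∈ D.base) (hGz : ‖G z‖ ≤ 1) :
    G z ∈ F := by
  have hGfoot : ∀ k, ‖G z - D.foot k z‖ ≤ 1 / 100 * D.r k := fun k =>
    D.approx_eq_foot_of_mem_base hz k ▸ hG k z
  have hfoot : ∀ k, ‖D.foot k z‖ ≤ 2 := fun k => by
    linarith [norm_le_norm_add_norm_sub (G z) (D.foot k z), hGfoot k, hF.r_le_one k]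
  rw [← hclosed.closure_eq, Metric.mem_closure_iff]
  intro ε hε
  obtain ⟨k, hk⟩ := exists_pow_lt_of_lt_one (half_pos hε) (by norm_num : (1 / 10 : ℝ) < 1)
  obtain ⟨e, he, hez⟩ := hF.exists_norm_foot_sub_le hz hfoot k
  refine ⟨e, (hF.E_eq ▸ he).1, ?_⟩
  rw [dist_eq_norm]
  linarith [norm_sub_le_norm_sub_add_norm_sub (G z) (D.foot k z) e, hGfoot k, D.r_pos k, hF.r_le k]

theorem IsFilledBy.inter_ball_eq_image_inter_ball (hF : D.IsFilledBy F) (hclosed : IsClosed F)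
    (hsurj : G.Surjective) (hG : ∀ k z, ‖G z - D.approx k z‖ ≤ 1 / 100 * D.r k) :
    F ∩ ball 0 1 = G '' D.base ∩ ball 0 1 := by
  ext x
  constructor
  · rintro ⟨hx, hx1⟩
    obtain ⟨z, rfl⟩ := hsurj x
    refine ⟨mem_image_of_mem G (mem_base_of_apply_mem hG ?_), hx1⟩
    rw [hF.E_eq]
    exact ⟨hx, (ball_subset_closedBall.trans (closedBall_subset_closedBall (by norm_num))) hx1⟩
  · rintro ⟨⟨z, hz, rfl⟩, hx1⟩
    exact ⟨hF.apply_mem_of_mem_base hclosed hG hz (mem_ball_zero_iff.1 hx1).le, hx1⟩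

end Image

end FlatSystem

theorem infDist_affineSubspace_mk' {H : Type*} [NormedAddCommGroup H] [InnerProductSpace ℝ H]
    (L : Submodule ℝ H) [L.HasOrthogonalProjection] (x y : H) :
    infDist y (AffineSubspace.mk' x L : Set H) = ‖Lᗮ.starProjection (y - x)‖ := by
  have hx := AffineSubspace.self_mem_mk' x L
  apply le_antisymm
  · refine (infDist_le_dist_of_mem
      (AffineSubspace.vadd_mem_mk' x (L.starProjection_apply_mem (y - x)))).trans_eq ?_
    rw [vadd_eq_add, dist_eq_norm, Submodule.starProjection_orthogonal_val, sub_sub, add_comm]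
  · refine (le_infDist ⟨x, hx⟩).2 fun p hp => ?_
    have hpx : p - x ∈ L := AffineSubspace.mem_mk'.1 hp
    rw [← sub_add_sub_cancel y p x, map_add, dist_eq_norm,
      Submodule.starProjection_orthogonal_apply_eq_zero hpx, add_zero]
    exact Lᗮ.norm_starProjection_apply_le _

section JonesNumber

variable {n d : ℕ} {E P : Set (V n)} {x : V n} {L : Submodule ℝ (V n)} {r s : ℝ}

theorem isAffinePlane_and_mem_iff :
    IsAffinePlane n d P ∧ x ∈ P ↔
      ∃ L : Submodule ℝ (V n), Module.finrank ℝ L = d ∧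
        (AffineSubspace.mk' x L : Set (V n)) = P := by
  constructor
  · rintro ⟨⟨Q, rfl, hQ, -⟩, hx⟩
    exact ⟨Q.direction, hQ, congrArg _ (AffineSubspace.mk'_eq hx)⟩
  · rintro ⟨L, hL, rfl⟩
    exact ⟨⟨_, rfl, by rw [AffineSubspace.direction_mk', hL], AffineSubspace.mk'_nonempty x L⟩,
      AffineSubspace.self_mem_mk' x L⟩

theorem iSup_infDist_nonneg : 0 ≤ ⨆ y ∈ E ∩ ball x r, infDist y P :=
  Real.iSup_nonneg fun _ => Real.iSup_nonneg fun _ => infDist_nonneg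

theorem fits_iSup_infDist (hr : 0 ≤ r) (L : Submodule ℝ (V n)) :
    Fits E x L r (⨆ y ∈ E ∩ ball x r, infDist y (AffineSubspace.mk' x L : Set (V n))) := by
  intro y hy hyx
  have hbdd : BddAbove (range fun y => ⨆ _ : y ∈ E ∩ ball x r,
      infDist y (AffineSubspace.mk' x L : Set (V n))) := by
    refine ⟨r, ?_⟩
    rintro _ ⟨y, rfl⟩
    exact Real.iSup_le (fun h => (infDist_le_dist_of_mem
      (AffineSubspace.self_mem_mk' x L)).trans (mem_ball.1 h.2).le) hr
  rw [← infDist_affineSubspace_mk']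
  refine le_trans ?_ (le_ciSup hbdd y)
  rw [ciSup_pos ⟨hy, mem_ball_iff_norm.2 hyx⟩]

theorem betaInf_nonneg (hr : 0 ≤ r) : 0 ≤ betaInf n d E x r := by
  refine mul_nonneg (inv_nonneg.2 hr) (Real.sInf_nonneg ?_)
  rintro _ ⟨P, -, -, rfl⟩
  exact iSup_infDist_nonneg

theorem Fits.betaInf_le (h : Fits E x L r (s * r)) (hr : 0 < r) (hs : 0 ≤ s)
    (hL : Module.finrank ℝ L = d) : betaInf n d E x r ≤ s := by
  obtain ⟨hP, hx⟩ := isAffinePlane_and_mem_iff.2 ⟨L, hL, rfl⟩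
  have hbdd : BddBelow { t : ℝ | ∃ P : Set (V n), IsAffinePlane n d P ∧ x ∈ P ∧
      t = ⨆ y ∈ E ∩ ball x r, infDist y P } := by
    refine ⟨0, ?_⟩
    rintro _ ⟨P, -, -, rfl⟩
    exact iSup_infDist_nonneg
  rw [betaInf, inv_mul_le_iff₀ hr, mul_comm]
  refine (csInf_le hbdd ⟨_, hP, hx, rfl⟩).trans ?_
  refine Real.iSup_le (fun y => Real.iSup_le (fun hy => ?_) (by positivity)) (by positivity)
  rw [infDist_affineSubspace_mk']
  exact h y hy.1 (mem_ball_iff_norm.1 hy.2)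

theorem exists_fits_of_betaInf_lt (hr : 0 < r) (hL : Module.finrank ℝ L = d)
    (hs : betaInf n d E x r < s) :
    ∃ L : Submodule ℝ (V n), Module.finrank ℝ L = d ∧ Fits E x L r (s * r) := by
  obtain ⟨hP, hx⟩ := isAffinePlane_and_mem_iff.2 ⟨L, hL, rfl⟩
  rw [betaInf, inv_mul_lt_iff₀ hr, mul_comm] at hs
  obtain ⟨_, ⟨P', hP', hx', rfl⟩, hlt⟩ := exists_lt_of_csInf_lt (by exact ⟨_, _, hP, hx, rfl⟩) hs
  obtain ⟨L', hL', rfl⟩ := isAffinePlane_and_mem_iff.1 ⟨hP', hx'⟩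
  exact ⟨L', hL', (fits_iSup_infDist hr.le L').mono le_rfl hlt.le⟩

end JonesNumber

section SlowMajorant

/-- A sequence dominating `f` which at most halves at each step. -/
def slowMajorant (c : ℝ) (f : ℕ → ℝ) : ℕ → ℝ
  | 0 => c + f 0
  | k + 1 => slowMajorant c f k / 2 + f (k + 1)

variable {c m : ℝ} {f : ℕ → ℝ}

theorem slowMajorant_nonneg (hc : 0 ≤ c) (hf : ∀ k, 0 ≤ f k) (k : ℕ) :
    0 ≤ slowMajorant c f k := by
  induction k with
  | zero => exact add_nonneg hc (hf 0)
  | succ k ih => exact add_nonneg (by linarith) (hf _)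

theorem le_slowMajorant (hc : 0 ≤ c) (hf : ∀ k, 0 ≤ f k) (k : ℕ) : f k ≤ slowMajorant c f k := by
  cases k with
  | zero => exact le_add_of_nonneg_left hc
  | succ k => exact le_add_of_nonneg_left (by linarith [slowMajorant_nonneg hc hf k])

theorem slowMajorant_le_two_mul (hf : ∀ k, 0 ≤ f k) (k : ℕ) :
    slowMajorant c f k ≤ 2 * slowMajorant c f (k + 1) := by
  rw [slowMajorant]
  linarith [hf (k + 1)]

theorem slowMajorant_le (hm : ∀ k, f k ≤ m) (hmc : m ≤ c) (k : ℕ) : slowMajorant c f k ≤ c + m := by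
  induction k with
  | zero => exact add_le_add_right (hm 0) c
  | succ k ih => rw [slowMajorant]; linarith [hm (k + 1)]

theorem sum_slowMajorant_sq_le (N : ℕ) :
    ∑ k ∈ Finset.range N, slowMajorant c f k ^ 2
      ≤ 2 * slowMajorant c f 0 ^ 2 + 4 * ∑ k ∈ Finset.range N, f (k + 1) ^ 2 := by
  suffices h : ∑ k ∈ Finset.range N, slowMajorant c f k ^ 2 + 2 * slowMajorant c f N ^ 2
      ≤ 2 * slowMajorant c f 0 ^ 2 + 4 * ∑ k ∈ Finset.range N, f (k + 1) ^ 2 by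
    linarith [sq_nonneg (slowMajorant c f N)]
  induction N with
  | zero => simp
  | succ N ih =>
    have hN : slowMajorant c f (N + 1) = slowMajorant c f N / 2 + f (N + 1) := rfl
    rw [Finset.sum_range_succ, Finset.sum_range_succ, hN]
    nlinarith [sq_nonneg (slowMajorant c f N / 2 - f (N + 1))]

theorem sum_range_shift_le {A : ℝ} (hf : ∀ k, 0 ≤ f k)
    (hA : ∀ N, ∑ k ∈ Finset.range N, f k ≤ A) (i N : ℕ) :
    ∑ k ∈ Finset.range N, f (k + i) ≤ A := by
  refine le_trans ?_ (hA (i + N))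
  simp only [Finset.sum_range_add, add_comm _ i]
  exact le_add_of_nonneg_left (Finset.sum_nonneg fun k _ => hf k)

end SlowMajorant

section Scale

/-- The scales at which `J_∞` samples the Jones numbers. -/
def scale (j : ℕ) : ℝ := (10 : ℝ) ^ (-(j : ℤ))

theorem scale_eq (j : ℕ) : scale j = 1 / 10 ^ j := by
  rw [scale, zpow_neg, zpow_natCast, one_div]

theorem scale_pos (j : ℕ) : 0 < scale j := by rw [scale_eq]; positivity

theorem scale_succ (j : ℕ) : scale (j + 1) = scale j / 10 := by
  rw [scale_eq, scale_eq, pow_succ, div_div]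

theorem scale_le_one (j : ℕ) : scale j ≤ 1 := by
  rw [scale_eq]
  exact div_le_one_of_le₀ (one_le_pow₀ (by norm_num)) (by positivity)

theorem scale_succ_eq_mul (k : ℕ) : scale (k + 1) = 1000 * scale (k + 4) := by
  simp only [scale_succ]; ring

end Scale

section Reifenberg

variable {n d : ℕ} {E : Set (V n)} {P : V n → ℝ → Set (V n)} {ε M : ℝ} {e c : V n} {j : ℕ}

/-- `E` is `ε`-close, in both directions, to the `d`-planes `P x r` at all scales up to `10` around
its points in `B(0,10)`. -/
def IsReifenbergFlat (n d : ℕ) (E : Set (V n)) (P : V n → ℝ → Set (V n)) (ε : ℝ) : Prop :=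
  ∀ x ∈ E ∩ ball (0 : V n) 10, ∀ r : ℝ, 0 < r → r ≤ 10 →
    IsAffinePlane n d (P x r) ∧ x ∈ P x r ∧
    (∀ y ∈ E ∩ ball x r, infDist y (P x r) ≤ ε * r) ∧
    (∀ y ∈ P x r ∩ ball x r, infDist y E ≤ ε * r)

theorem IsReifenbergFlat.exists_direction (h : IsReifenbergFlat n d E P ε) (hE : IsClosed E)
    {x : V n} (hx : x ∈ E ∩ ball (0 : V n) 10) {r : ℝ} (hr : 0 < r) (hr' : r ≤ 10) :
    ∃ L : Submodule ℝ (V n), Module.finrank ℝ L = d ∧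
      (AffineSubspace.mk' x L : Set (V n)) = P x r ∧
      Fits E x L r (ε * r) ∧ Fills E x L r (ε * r) := by
  obtain ⟨hP, hxP, hnear, hdense⟩ := h x hx r hr hr'
  obtain ⟨L, hL, hLP⟩ := isAffinePlane_and_mem_iff.1 ⟨hP, hxP⟩
  refine ⟨L, hL, hLP, fun y hy hyx => ?_, fun v hv hvr => ?_⟩
  · rw [← infDist_affineSubspace_mk', hLP]
    exact hnear y ⟨hy, mem_ball_iff_norm.2 hyx⟩
  · obtain ⟨y, hy, hyd⟩ := hE.exists_infDist_eq_dist ⟨x, hx.1⟩ (x + v)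
    refine ⟨y, hy, ?_⟩
    rw [← dist_eq_norm, dist_comm, ← hyd]
    refine hdense _ ⟨?_, mem_ball_iff_norm.2 (by rwa [add_sub_cancel_left])⟩
    rw [← hLP, add_comm]
    exact AffineSubspace.vadd_mem_mk' x hv

/-- An upper bound for the Jones number of `E` at scale `10 ^ (-j)`. The positive, summable margin
makes it attained by some plane, and positive `ε` makes it positive. -/
def jonesBound (d : ℕ) (E : Set (V n)) (ε : ℝ) (e : V n) (j : ℕ) : ℝ :=
  betaInf n d E e (scale j) + ε * (1 / 2) ^ j

theorem jonesBound_nonneg (d : ℕ) (E : Set (V n)) (hε : 0 ≤ ε) (e : V n) (j : ℕ) :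
    0 ≤ jonesBound d E ε e j :=
  add_nonneg (betaInf_nonneg (scale_pos j).le) (by positivity)

theorem IsReifenbergFlat.jonesBound_le (h : IsReifenbergFlat n d E P ε) (hE : IsClosed E)
    (hε : 0 ≤ ε) (he : e ∈ E ∩ ball (0 : V n) 10) (j : ℕ) : jonesBound d E ε e j ≤ 2 * ε := by
  obtain ⟨L, hL, -, hfits, -⟩ :=
    h.exists_direction hE he (scale_pos j) ((scale_le_one j).trans (by norm_num))
  have hmargin : ε * (1 / 2) ^ j ≤ ε :=
    mul_le_of_le_one_right hε (pow_le_one₀ (by norm_num) (by norm_num))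
  rw [jonesBound, two_mul]
  exact add_le_add (hfits.betaInf_le (scale_pos j) hε hL) hmargin

theorem sum_jonesBound_sq_le (hε : 0 ≤ ε) (hε' : ε ≤ 1)
    (hM : ∀ N : ℕ, ∑ k ∈ Finset.range N, betaInf n d E e (scale k) ^ 2 ≤ M) (N : ℕ) :
    ∑ k ∈ Finset.range N, jonesBound d E ε e k ^ 2 ≤ 2 * M + 4 := by
  have hterm : ∀ k, jonesBound d E ε e k ^ 2
      ≤ 2 * betaInf n d E e (scale k) ^ 2 + 2 * (1 / 2) ^ k := fun k => by
    have hmargin : (ε * (1 / 2) ^ k) ^ 2 ≤ (1 / 2) ^ k := by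
      rw [mul_pow, ← pow_mul, mul_comm k 2, pow_mul]
      refine (mul_le_of_le_one_left (by positivity) (pow_le_one₀ hε hε')).trans ?_
      exact pow_le_pow_left₀ (by norm_num) (by norm_num) k
    exact add_sq_le.trans (by linarith)
  refine (Finset.sum_le_sum fun k _ => hterm k).trans ?_
  rw [Finset.sum_add_distrib, ← Finset.mul_sum, ← Finset.mul_sum]
  linarith [hM N, sum_geometric_two_le N]

/-- `Λ j e` is the direction of an almost optimal approximating `d`-plane of `E` through `e` at
scale `10 ^ (-j)`. -/
structure IsPlaneField (d : ℕ) (E : Set (V n)) (ε : ℝ) (Λ : ℕ → V n → Submodule ℝ (V n)) :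
    Prop where
  finrank_eq : ∀ e ∈ E ∩ ball (0 : V n) 10, ∀ j, Module.finrank ℝ (Λ j e) = d
  fits : ∀ e ∈ E ∩ ball (0 : V n) 10, ∀ j,
    Fits E e (Λ j e) (scale j) (jonesBound d E ε e j * scale j)
  fills : ∀ e ∈ E ∩ ball (0 : V n) 10, ∀ j, Fills E e (Λ j e) (scale j / 4) (10 * ε * scale j)

/-- An almost optimal plane for `β_∞` only fits `E`; it also fills since it is close to the
bilaterally approximating plane. -/
theorem IsReifenbergFlat.exists_fits_fills (h : IsReifenbergFlat n d E P ε) (hE : IsClosed E)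
    (hε : 0 < ε) (hε' : ε ≤ 1 / 10 ^ 5) (j : ℕ) (e : V n) (he : e ∈ E ∩ ball (0 : V n) 10) :
    ∃ L : Submodule ℝ (V n), Module.finrank ℝ L = d ∧
      Fits E e L (scale j) (jonesBound d E ε e j * scale j) ∧
      Fills E e L (scale j / 4) (10 * ε * scale j) := by
  have hs := scale_pos j
  obtain ⟨L₀, hL₀, -, hfits₀, hfills₀⟩ :=
    h.exists_direction hE he hs ((scale_le_one j).trans (by norm_num))
  obtain ⟨L, hL, hfits⟩ := exists_fits_of_betaInf_lt (E := E) (x := e) hs hL₀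
    (lt_add_of_pos_right _ (by positivity : 0 < ε * (1 / 2) ^ j))
  refine ⟨L, hL, hfits, ?_⟩
  have hjones := mul_le_mul_of_nonneg_right (h.jonesBound_le hE hε.le he j) hs.le
  have hclose : scale j / 4 * ‖Lᗮ.starProjection ∘L L₀.starProjection‖
      ≤ 3 / 2 * (ε * scale j + 2 * ε * scale j) :=
    (hfills₀.mono (by linarith) (by nlinarith)).mul_norm_starProjection_comp_le (by positivity)
      (hfits₀.mono (by linarith) le_rfl) (hfits.mono (by linarith) hjones)
  have hangle : ‖Lᗮ.starProjection ∘L L₀.starProjection‖ ≤ 18 * ε :=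
    le_of_mul_le_mul_left (hclose.trans_eq (by ring)) (by positivity : 0 < scale j / 4)
  exact (Fills.of_norm_starProjection_comp_le (ρ := scale j / 4)
    (hfills₀.mono (by linarith) le_rfl) (hL₀.trans hL.symm) hangle (by linarith)).mono le_rfl
    (by linarith)

theorem IsReifenbergFlat.exists_isPlaneField (h : IsReifenbergFlat n d E P ε) (hE : IsClosed E)
    (hε : 0 < ε) (hε' : ε ≤ 1 / 10 ^ 5) : ∃ Λ, IsPlaneField d E ε Λ := by
  choose! Λ hdim hfits hfills using h.exists_fits_fills hE hε hε'
  exact ⟨Λ, fun e he j => hdim j e he, fun e he j => hfits j e he, fun e he j => hfills j e he⟩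

/-- A bound for the rotation of the approximating planes around `e` between scales comparable to
`10 ^ (-k)`, made slowly varying in `k`. -/
def planeOscillation (d : ℕ) (E : Set (V n)) (ε : ℝ) (e : V n) : ℕ → ℝ :=
  slowMajorant (10 ^ 5 * ε) fun k => 1000 * ∑ i ∈ Finset.range 3, jonesBound d E ε e (k + i)

theorem sum_jonesBound_nonneg (d : ℕ) (E : Set (V n)) (hε : 0 ≤ ε) (e : V n) (k : ℕ) :
    0 ≤ 1000 * ∑ i ∈ Finset.range 3, jonesBound d E ε e (k + i) :=
  mul_nonneg (by norm_num) (Finset.sum_nonneg fun _ _ => jonesBound_nonneg d E hε e _)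

theorem planeOscillation_nonneg (d : ℕ) (E : Set (V n)) (hε : 0 ≤ ε) (e : V n) (k : ℕ) :
    0 ≤ planeOscillation d E ε e k :=
  slowMajorant_nonneg (by positivity) (sum_jonesBound_nonneg d E hε e) k

theorem planeOscillation_le_two_mul (d : ℕ) (E : Set (V n)) (hε : 0 ≤ ε) (e : V n) (k : ℕ) :
    planeOscillation d E ε e k ≤ 2 * planeOscillation d E ε e (k + 1) :=
  slowMajorant_le_two_mul (sum_jonesBound_nonneg d E hε e) k

theorem sum_jonesBound_le_planeOscillation (d : ℕ) (E : Set (V n)) (hε : 0 ≤ ε) (e : V n) (k : ℕ) :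
    1000 * (jonesBound d E ε e k + jonesBound d E ε e (k + 1) + jonesBound d E ε e (k + 2))
      ≤ planeOscillation d E ε e k := by
  have hle : 1000 * ∑ i ∈ Finset.range 3, jonesBound d E ε e (k + i)
      ≤ planeOscillation d E ε e k :=
    le_slowMajorant (by positivity) (sum_jonesBound_nonneg d E hε e) k
  simpa only [Finset.sum_range_succ, Finset.sum_range_zero, zero_add, add_zero] using hle

theorem sum_jonesBound_le_planeOscillation_zero (d : ℕ) (E : Set (V n)) (hε : 0 ≤ ε) (e : V n) :
    10 ^ 5 * ε + 1000 * jonesBound d E ε e 1 ≤ planeOscillation d E ε e 0 := by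
  have hle := Finset.single_le_sum (fun i _ => jonesBound_nonneg d E hε e (0 + i))
    (Finset.mem_range.2 (by norm_num : 1 < 3))
  rw [planeOscillation, slowMajorant]
  linarith

theorem norm_starProjection_orthogonal_le_planeOscillation_zero (hε : 0 ≤ ε)
    (he : e ∈ E ∩ closedBall (0 : V n) 5)
    {L₀ : Submodule ℝ (V n)} (hfits₀ : Fits E 0 L₀ 10 (ε * 10)) :
    ‖L₀ᗮ.starProjection e‖ ≤ planeOscillation d E ε e 0 * scale 4 := by
  have hperp := hfits₀ e he.1
  rw [sub_zero] at hperp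
  rw [scale_eq]
  linarith [hperp (by linarith [mem_closedBall_zero_iff.1 he.2]), jonesBound_nonneg d E hε e 1,
    sum_jonesBound_le_planeOscillation_zero d E hε e]

theorem planeOscillation_le (hε : 0 ≤ ε) (h : ∀ j, jonesBound d E ε e j ≤ 2 * ε) (k : ℕ) :
    planeOscillation d E ε e k ≤ 2 * 10 ^ 5 * ε := by
  refine (slowMajorant_le (m := 6000 * ε) (fun k => ?_) (by linarith) k).trans (by linarith)
  have hsum := Finset.sum_le_card_nsmul (Finset.range 3) _ _ fun i _ => h (k + i)
  rw [Finset.card_range, nsmul_eq_mul] at hsum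
  push_cast at hsum
  linarith

theorem sum_planeOscillation_sq_le_of_jonesBound {A : ℝ} (hε : 0 ≤ ε)
    (hosc : planeOscillation d E ε e 0 ≤ 1)
    (hA : ∀ N, ∑ k ∈ Finset.range N, jonesBound d E ε e k ^ 2 ≤ A) (N : ℕ) :
    ∑ k ∈ Finset.range N, planeOscillation d E ε e k ^ 2 ≤ 2 + 36 * 10 ^ 6 * A := by
  have hfirst : planeOscillation d E ε e 0 ^ 2 ≤ 1 :=
    pow_le_one₀ (planeOscillation_nonneg d E hε e 0) hosc
  have hcauchy : ∀ k, (1000 * ∑ i ∈ Finset.range 3, jonesBound d E ε e (k + 1 + i)) ^ 2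
      ≤ 3 * 10 ^ 6 * ∑ i ∈ Finset.range 3, jonesBound d E ε e (k + (1 + i)) ^ 2 := fun k => by
    have hsq := sq_sum_le_card_mul_sum_sq (s := Finset.range 3)
      (f := fun i => jonesBound d E ε e (k + (1 + i)))
    rw [Finset.card_range] at hsq
    push_cast at hsq
    simp only [add_assoc, mul_pow]
    linarith
  have hshift : ∑ k ∈ Finset.range N, ∑ i ∈ Finset.range 3, jonesBound d E ε e (k + (1 + i)) ^ 2
      ≤ 3 * A := by
    rw [Finset.sum_comm]
    refine (Finset.sum_le_card_nsmul _ _ A fun i _ =>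
      sum_range_shift_le (fun k => sq_nonneg (jonesBound d E ε e k)) hA (1 + i) N).trans_eq ?_
    rw [Finset.card_range, nsmul_eq_mul, Nat.cast_ofNat]
  have htail := Finset.sum_le_sum (s := Finset.range N) fun k _ => hcauchy k
  rw [← Finset.mul_sum] at htail
  rw [planeOscillation] at hfirst
  exact (sum_slowMajorant_sq_le N).trans (by linarith)

theorem IsReifenbergFlat.sum_planeOscillation_sq_le (h : IsReifenbergFlat n d E P ε)
    (hE : IsClosed E) (hε : 0 ≤ ε) (hε' : 2 * 10 ^ 5 * ε ≤ 1) (he : e ∈ E ∩ ball (0 : V n) 10)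
    (hM : ∀ N : ℕ, ∑ k ∈ Finset.range N, betaInf n d E e (scale k) ^ 2 ≤ M) (N : ℕ) :
    ∑ k ∈ Finset.range N, planeOscillation d E ε e k ^ 2
      ≤ 2 + 36 * 10 ^ 6 * (2 * M + 4) :=
  sum_planeOscillation_sq_le_of_jonesBound hε
    ((planeOscillation_le hε (h.jonesBound_le hE hε he) 0).trans hε')
    (sum_jonesBound_sq_le hε (by linarith) hM) N

namespace IsPlaneField

variable {Λ : ℕ → V n → Submodule ℝ (V n)}

theorem jonesBound_le_of_near (h : IsPlaneField d E ε Λ) (hε : 0 ≤ ε)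
    (he : e ∈ E ∩ ball (0 : V n) 10) (hc : c ∈ E) (hce : ‖c - e‖ ≤ scale (j + 1) / 10) :
    jonesBound d E ε c (j + 1) ≤ 21 * jonesBound d E ε e j := by
  have hs := scale_pos j
  have hj := jonesBound_nonneg d E hε e j
  have hbeta : betaInf n d E c (scale (j + 1)) ≤ 20 * jonesBound d E ε e j := by
    refine Fits.betaInf_le (L := Λ j e) ?_ (scale_pos _) (by positivity) (h.finrank_eq e he j)
    rw [scale_succ] at hce ⊢
    exact ((h.fits e he j).of_near hc (by positivity) (by linarith)).mono le_rfl (by linarith)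
  have hmargin : ε * (1 / 2) ^ (j + 1) ≤ jonesBound d E ε e j := by
    have hβ := betaInf_nonneg (d := d) (E := E) (x := e) hs.le
    have hpos : 0 ≤ ε * (1 / 2) ^ j := by positivity
    rw [jonesBound, pow_succ]
    linarith
  rw [jonesBound]
  linarith

theorem fits_of_near (h : IsPlaneField d E ε Λ) (he : e ∈ E ∩ ball (0 : V n) 10) (hc : c ∈ E)
    (hce : ‖c - e‖ ≤ scale j / 10) :
    Fits E c (Λ j e) (2 * (scale j / 4)) (2 * (jonesBound d E ε e j * scale j)) := by
  have hs := scale_pos j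
  exact (h.fits e he j).of_near hc (by positivity) (by linarith)

theorem norm_starProjection_orthogonal_le_of_near (h : IsPlaneField d E ε Λ) (hε : 0 ≤ ε)
    (he : e ∈ E ∩ ball (0 : V n) 10) (hc : c ∈ E) (hce : ‖c - e‖ ≤ 100 * scale (j + 4)) :
    ‖(Λ (j + 1) e)ᗮ.starProjection (c - e)‖ ≤ planeOscillation d E ε e j * scale (j + 4) := by
  have hs := scale_pos (j + 4)
  refine (h.fits e he (j + 1) c hc (by rw [scale_succ_eq_mul]; linarith)).trans ?_
  rw [scale_succ_eq_mul, ← mul_assoc]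
  refine mul_le_mul_of_nonneg_right ?_ hs.le
  linarith [sum_jonesBound_le_planeOscillation d E hε e j, jonesBound_nonneg d E hε e j,
    jonesBound_nonneg d E hε e (j + 2)]

theorem fits_half (h : IsPlaneField d E ε Λ) (he : e ∈ E ∩ ball (0 : V n) 10) (j : ℕ) :
    Fits E e (Λ j e) (2 * (scale j / 4)) (jonesBound d E ε e j * scale j) :=
  (h.fits e he j).mono (by linarith [scale_pos j]) le_rfl

theorem fills_third (h : IsPlaneField d E ε Λ) (hε' : ε ≤ 1 / 10 ^ 5)
    (he : e ∈ E ∩ ball (0 : V n) 10) (j : ℕ) :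
    Fills E e (Λ j e) (scale j / 4) (scale j / 4 / 3) :=
  (h.fills e he j).mono le_rfl (by nlinarith [scale_pos j])

theorem fills_succ (h : IsPlaneField d E ε Λ) (hε : 0 ≤ ε) (he : e ∈ E ∩ ball (0 : V n) 10)
    (j : ℕ) : Fills E e (Λ (j + 1) e) (10 * scale (j + 4)) (2 * 10 ^ 5 * ε * scale (j + 4)) := by
  have hs := scale_pos (j + 4)
  have hscale := scale_succ_eq_mul j
  exact (h.fills e he (j + 1)).mono (by linarith) (by rw [hscale]; nlinarith)

theorem gap_le_of_near (h : IsPlaneField d E ε Λ) (hε : 0 ≤ ε) (hε' : ε ≤ 1 / 10 ^ 5)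
    (he : e ∈ E ∩ ball (0 : V n) 10) (hc : c ∈ E ∩ ball (0 : V n) 10)
    (hce : ‖c - e‖ ≤ 100 * scale (j + 4)) :
    gap (Λ (j + 1) c) (Λ (j + 1) e) ≤ planeOscillation d E ε e j := by
  have hs := scale_pos (j + 1)
  have hnear : ‖c - e‖ ≤ scale (j + 1) / 10 := by rw [scale_succ_eq_mul]; linarith
  have hgap := (h.fills_third hε' hc (j + 1)).mul_gap_le (by positivity) (h.fits_half hc _)
    (h.fits_of_near he hc.1 hnear) (h.fills_third hε' he _) (h.fits_half he _)
    (h.fits_of_near hc he.1 (by rwa [norm_sub_rev]))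
  have hle : gap (Λ (j + 1) c) (Λ (j + 1) e)
      ≤ 18 * (jonesBound d E ε c (j + 1) + jonesBound d E ε e (j + 1)) :=
    le_of_mul_le_mul_left (hgap.trans_eq (by ring)) (by positivity : 0 < scale (j + 1) / 4)
  linarith [h.jonesBound_le_of_near hε he hc.1 hnear, jonesBound_nonneg d E hε e j,
    jonesBound_nonneg d E hε e (j + 1), jonesBound_nonneg d E hε e (j + 2),
    sum_jonesBound_le_planeOscillation d E hε e j]

theorem gap_succ_le (h : IsPlaneField d E ε Λ) (hε : 0 ≤ ε) (hε' : ε ≤ 1 / 10 ^ 5)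
    (he : e ∈ E ∩ ball (0 : V n) 10) (j : ℕ) :
    gap (Λ (j + 2) e) (Λ (j + 1) e) ≤ planeOscillation d E ε e j := by
  have hs := scale_pos (j + 2)
  have hsucc := scale_succ (j + 1)
  have hfits : Fits E e (Λ (j + 1) e) (2 * (scale (j + 2) / 4))
      (jonesBound d E ε e (j + 1) * scale (j + 1)) := (h.fits e he _).mono (by linarith) le_rfl
  have hfills : Fills E e (Λ (j + 1) e) (scale (j + 2) / 4) (scale (j + 2) / 4 / 3) :=
    (h.fills e he _).mono (by linarith) (by nlinarith)
  have hgap := (h.fills_third hε' he (j + 2)).mul_gap_le (by positivity) (h.fits_half he _) hfits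
    hfills hfits (h.fits_half he _)
  have hle : gap (Λ (j + 2) e) (Λ (j + 1) e)
      ≤ 12 * jonesBound d E ε e (j + 2) + 120 * jonesBound d E ε e (j + 1) :=
    le_of_mul_le_mul_left (hgap.trans_eq (by rw [hsucc]; ring))
      (by positivity : 0 < scale (j + 2) / 4)
  linarith [jonesBound_nonneg d E hε e j, jonesBound_nonneg d E hε e (j + 1),
    jonesBound_nonneg d E hε e (j + 2), sum_jonesBound_le_planeOscillation d E hε e j]

theorem gap_base_le (h : IsPlaneField d E ε Λ) (hε : 0 ≤ ε) (hε' : ε ≤ 1 / 10 ^ 5)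
    (he : e ∈ E ∩ closedBall (0 : V n) 5) {L₀ : Submodule ℝ (V n)}
    (hfits₀ : Fits E 0 L₀ 10 (ε * 10)) (hfills₀ : Fills E 0 L₀ 10 (ε * 10)) :
    gap (Λ 1 e) L₀ ≤ planeOscillation d E ε e 0 := by
  have he5 : ‖e - 0‖ ≤ 5 := by simpa using he.2
  have he' : e ∈ E ∩ ball (0 : V n) 10 := ⟨he.1, closedBall_subset_ball (by norm_num) he.2⟩
  have hs : scale 1 = 1 / 10 := by rw [scale_eq, pow_one]
  have hfits : Fits E e L₀ (2 * (scale 1 / 4)) (2 * (ε * 10)) :=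
    hfits₀.of_near he.1 (by rw [hs]; norm_num) (by linarith)
  have hfills : Fills E e L₀ (scale 1 / 4) (scale 1 / 4 / 3) :=
    (hfills₀.of_near (hfits₀ e he.1 (by linarith)) (by linarith)).mono le_rfl (by linarith)
  have hgap := (h.fills_third hε' he' 1).mul_gap_le (by rw [hs]; norm_num) (h.fits_half he' 1)
    hfits hfills hfits (h.fits_half he' 1)
  rw [hs] at hgap
  linarith [jonesBound_nonneg d E hε e 1, sum_jonesBound_le_planeOscillation_zero d E hε e]

end IsPlaneField

/-- The system uses the scales `10 ^ (-k-4)`, but the planes of scale `10 ^ (-k-1)`, so that these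
approximate `E` in a ball much larger than the scale. -/
theorem IsReifenbergFlat.exists_flatSystem (h : IsReifenbergFlat n d E P ε) (hE : IsClosed E)
    (hε : 0 < ε) {K : ℝ} {χ : ℝ → ℝ} (hK : 1 ≤ K) (hεK : 2 * 10 ^ 5 * ε * K ≤ 1 / 10 ^ 6)
    (hχ : IsCutoff χ K)
    (hpart : ∀ E : Set (V n), IsCompact E → ∀ r : ℝ, 0 < r → ∃ X θ, IsNetPartition E r K X θ)
    (hM : ∀ x ∈ E ∩ ball (0 : V n) 10, ∀ N : ℕ,
      ∑ k ∈ Finset.range N, betaInf n d E x (scale k) ^ 2 ≤ M)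
    {L₀ : Submodule ℝ (V n)} (hfits₀ : Fits E 0 L₀ 10 (ε * 10))
    (hfills₀ : Fills E 0 L₀ 10 (ε * 10)) :
    ∃ D : FlatSystem (V n) K (2 * 10 ^ 5 * ε) (2 + 36 * 10 ^ 6 * (2 * M + 4)),
      D.base = L₀ ∧ D.IsFilledBy E := by
  have hεδ : 2 * 10 ^ 5 * ε ≤ 1 / 10 ^ 6 := (le_mul_of_one_le_right (by positivity) hK).trans hεK
  have hε' : ε ≤ 1 / 10 ^ 5 := by linarith
  obtain ⟨Λ, hΛ⟩ := h.exists_isPlaneField hE hε hε'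
  have hmem : ∀ e ∈ E ∩ closedBall (0 : V n) 5, e ∈ E ∩ ball (0 : V n) 10 := fun e he =>
    ⟨he.1, closedBall_subset_ball (by norm_num) he.2⟩
  choose X θ hXθ using fun k => hpart _
    ((isCompact_closedBall (0 : V n) 5).inter_left hE) (scale (k + 4)) (scale_pos _)
  have hosc : ∀ e ∈ E ∩ closedBall (0 : V n) 5, ∀ k,
      planeOscillation d E ε e k ≤ 2 * 10 ^ 5 * ε :=
    fun e he => planeOscillation_le hε.le (h.jonesBound_le hE hε.le (hmem e he))
  have hbase : Fills E 0 L₀ 3 (2 * 10 ^ 5 * ε * scale 4) :=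
    hfills₀.mono (by norm_num) (by rw [scale_eq]; linarith)
  exact ⟨{
    E := E ∩ closedBall 0 5
    r := fun k => scale (k + 4)
    base := L₀
    L := fun k => Λ (k + 1)
    net := X
    θ := θ
    β := planeOscillation d E ε
    χ := χ
    one_le_K := hK
    δ_nonneg := by positivity
    δ_mul_K_le := hεK
    r_pos := fun k => scale_pos _
    r_succ := fun k => scale_succ _
    partition := hXθ
    cutoff := hχ
    β_nonneg := fun e _ => planeOscillation_nonneg d E hε.le e
    β_le := hosc
    β_le_two_mul := fun e _ => planeOscillation_le_two_mul d E hε.le e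
    sum_β_sq_le := fun e he => h.sum_planeOscillation_sq_le hE hε.le (by linarith) (hmem e he)
      (hM e (hmem e he))
    gap_le := fun e he c hc k => hΛ.gap_le_of_near hε.le hε' (hmem e he) (hmem c hc)
    flat := fun e he c hc k => hΛ.norm_starProjection_orthogonal_le_of_near hε.le (hmem e he) hc.1
    gap_succ_le := fun e he k => hΛ.gap_succ_le hε.le hε' (hmem e he) k
    gap_zero_le := fun e he => hΛ.gap_base_le hε.le hε' he hfits₀ hfills₀
    flat_zero := fun e he =>
      norm_starProjection_orthogonal_le_planeOscillation_zero hε.le he hfits₀ },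
    rfl, rfl, scale_le_one _, hbase, fun e he k => hΛ.fills_succ hε.le (hmem e he) k⟩

end Reifenberg

/-- **Theorem 1.13**: if `J_∞` is bounded by `M` on `E ∩ B(0,10)`, the Reifenberg
parameterization is bi-Lipschitz, with constant depending only on `n`, `d`, `M`.
The bound `J_∞(x) = Σ_k β_∞(x,10^{-k})² ≤ M` is expressed via partial sums. -/
theorem thm_1_13 (n d : ℕ) (hd : 0 < d) (hdn : d < n) :
    ∃ ε : ℝ, 0 < ε ∧
    ∀ M : ℝ, ∃ C : ℝ, 1 ≤ C ∧
      ∀ E : Set (V n), IsClosed E → (0 : V n) ∈ E →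
      ∀ P : V n → ℝ → Set (V n),
      (∀ x ∈ E ∩ ball (0 : V n) 10, ∀ r : ℝ, 0 < r → r ≤ 10 →
        IsAffinePlane n d (P x r) ∧ x ∈ P x r ∧
        (∀ y ∈ E ∩ ball x r, infDist y (P x r) ≤ ε * r) ∧
        (∀ y ∈ P x r ∩ ball x r, infDist y E ≤ ε * r)) →
      -- `J_∞(x) ≤ M` on `E ∩ B(0,10)`
      (∀ x ∈ E ∩ ball (0 : V n) 10, ∀ N : ℕ,
        ∑ k ∈ Finset.range N, betaInf n d E x ((10 : ℝ) ^ (-(k : ℤ))) ^ 2 ≤ M) →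
      ∃ g : V n → V n, Function.Bijective g ∧
        E ∩ ball (0 : V n) 1 = g '' (P 0 10) ∩ ball (0 : V n) 1 ∧
        ∀ x y : V n,
          C⁻¹ * dist x y ≤ dist (g x) (g y) ∧ dist (g x) (g y) ≤ C * dist x y := by
  obtain ⟨K, χ, hK, hχ, hpart⟩ := exists_isCutoff_isNetPartition (V n)
  have hε : 0 < 1 / (2 * 10 ^ 11 * K) := by positivity
  refine ⟨1 / (2 * 10 ^ 11 * K), hε, fun M => ?_⟩
  set C : ℝ := 6 * FlatSystem.distortion K (2 + 36 * 10 ^ 6 * (2 * M + 4))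
  have hC₁ : 1 ≤ C := by linarith [FlatSystem.one_le_distortion K (2 + 36 * 10 ^ 6 * (2 * M + 4))]
  refine ⟨C, hC₁, fun E hE h0 P hP hJ => ?_⟩
  have hflat : IsReifenbergFlat n d E P (1 / (2 * 10 ^ 11 * K)) := hP
  obtain ⟨L₀, -, hL₀, hfits, hfills⟩ := hflat.exists_direction hE
    ⟨h0, mem_ball_self (by norm_num)⟩ (by norm_num : (0 : ℝ) < 10) le_rfl
  obtain ⟨D, rfl, hD⟩ := hflat.exists_flatSystem hE hε hK
    (by field_simp; norm_num) hχ hpart hJ hfits hfills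
  obtain ⟨G, hsurj, hlip, hanti, hG⟩ := D.exists_bilipschitz_parametrization
  have hP₀ : P 0 10 = D.base := by ext; simp [← hL₀, AffineSubspace.mem_mk']
  have hcoe : (C.toNNReal : ℝ) = C := Real.coe_toNNReal C (by linarith)
  refine ⟨G, ⟨hanti.injective, hsurj⟩, ?_, fun x y => ⟨?_, ?_⟩⟩
  · rw [hD.inter_ball_eq_image_inter_ball hE hsurj hG, hP₀]
  · rw [inv_mul_le_iff₀ (by linarith), ← hcoe]
    exact hanti.le_mul_dist x y
  · rw [← hcoe]
    exact hlip.dist_le_mul x y
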